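/- arXiv:0904.0650 — 5 statements merged into one kernel-verified Lean document; each statement's English description precedes it below -/
import Mathlib

section
/- Let Q be a monic cubic complex polynomial and P a complex polynomial of degree at most 2. For every ε > 0 there exists N such that for every n ≥ N the following holds: if V and S are complex polynomials with deg V ≤ 1 and deg S = n satisfying Q·S'' + P·S' + V·S = 0 identically, then every root of V and every root of S lies at distance less than ε from the convex hull Δ_Q of the set of roots of Q (where ℂ is identified with ℝ²). -/
open Polynomial

/-- A point at distance at least `ε` from a compact convex set `K` is separated from the
closed `ε / 2`-neighbourhood of `K` by a ball whose center is bounded in terms of `K` and `ε`. -/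
lemma exists_bound_center_separating_ball {E : Type*} [NormedAddCommGroup E]
    [InnerProductSpace ℝ E] {K : Set E} (hK : IsCompact K) (hconv : Convex ℝ K)
    (hne : K.Nonempty) {ε : ℝ} (hε : 0 < ε) :
    ∃ B : ℝ, ∀ z, ε ≤ Metric.infDist z K → ∃ c, ‖c‖ ≤ B ∧
      ∀ w, Metric.infDist w K ≤ ε / 2 → ‖w - c‖ < ‖z - c‖ := by
  obtain ⟨R, hR⟩ := hK.isBounded.exists_norm_le
  have hR0 : 0 ≤ R := (norm_nonneg _).trans (hR _ hne.some_mem)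
  set D : ℝ := 2 * R with hD
  set ρ : ℝ := 2 * D ^ 2 / ε with hρ
  have hρ0 : 0 ≤ ρ := by positivity
  have hρε : ρ * ε = 2 * D ^ 2 := by rw [hρ]; field_simp
  refine ⟨R + ρ, fun z hz => ?_⟩
  obtain ⟨k, hkK, hk⟩ := hK.exists_infDist_eq_dist hne z
  rw [hk, dist_eq_norm] at hz
  have hpos : 0 < ‖z - k‖ := hε.trans_le hz
  have hinner : ∀ w ∈ K, inner ℝ (z - k) (w - k) ≤ 0 := by
    rw [← norm_eq_iInf_iff_real_inner_le_zero hconv hkK, ← dist_eq_norm, ← hk,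
      Metric.infDist_eq_iInf]
    simp only [dist_eq_norm]
  set t : ℝ := ρ / ‖z - k‖ with ht
  have ht0 : 0 ≤ t := by positivity
  have htρ : ‖t • (z - k)‖ = ρ := by
    rw [norm_smul, Real.norm_of_nonneg ht0, ht]; field_simp
  refine ⟨k - t • (z - k), ?_, fun w hw => ?_⟩
  · calc ‖k - t • (z - k)‖ ≤ ‖k‖ + ‖t • (z - k)‖ := norm_sub_le _ _
      _ ≤ R + ρ := by rw [htρ]; gcongr; exact hR k hkK
  · obtain ⟨x, hxK, hx⟩ := hK.exists_infDist_eq_dist hne w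
    rw [hx, dist_eq_norm] at hw
    have hzc : ‖z - (k - t • (z - k))‖ = ρ + ‖z - k‖ := by
      have : z - (k - t • (z - k)) = (t + 1) • (z - k) := by module
      rw [this, norm_smul, Real.norm_of_nonneg (by positivity), add_mul, ht]
      field_simp
    have hxc : ‖x - (k - t • (z - k))‖ ≤ ρ + ε / 4 := by
      refine le_of_sq_le_sq ?_ (by positivity)
      have : x - (k - t • (z - k)) = (x - k) + t • (z - k) := by module
      rw [this, norm_add_sq_real, htρ, real_inner_smul_right, real_inner_comm]
      have h1 : ‖x - k‖ ≤ D := (norm_sub_le _ _).trans (by linarith [hR x hxK, hR k hkK])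
      have h2 : ‖x - k‖ ^ 2 ≤ D ^ 2 := by gcongr
      nlinarith [mul_nonpos_of_nonneg_of_nonpos ht0 (hinner x hxK)]
    calc ‖w - (k - t • (z - k))‖ ≤ ‖w - x‖ + ‖x - (k - t • (z - k))‖ :=
          norm_sub_le_norm_sub_add_norm_sub ..
      _ < ‖z - (k - t • (z - k))‖ := by rw [hzc]; linarith

/-- A polynomial of degree at most `d` is `O((1 + ‖z‖) ^ d)`. -/
lemma Polynomial.exists_norm_eval_le_mul_one_add_norm_pow (P : ℂ[X]) {d : ℕ}
    (hP : P.natDegree ≤ d) : ∃ C : ℝ, 0 ≤ C ∧ ∀ z, ‖P.eval z‖ ≤ C * (1 + ‖z‖) ^ d := by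
  refine ⟨∑ i ∈ Finset.range (P.natDegree + 1), ‖P.coeff i‖, by positivity, fun z => ?_⟩
  rw [eval_eq_sum_range, Finset.sum_mul]
  refine (norm_sum_le _ _).trans (Finset.sum_le_sum fun i hi => ?_)
  rw [norm_mul, norm_pow]
  gcongr
  calc ‖z‖ ^ i ≤ (1 + ‖z‖) ^ i := by gcongr; linarith
    _ ≤ (1 + ‖z‖) ^ d := by
      gcongr
      · linarith [norm_nonneg z]
      · have := Finset.mem_range.1 hi
        omega

/-- Away from the points of `s`, the product of the `z - a` with `a ∈ s` grows at least like
`(1 + ‖z‖) ^ card s`. -/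
lemma Multiset.exists_one_add_norm_pow_card_le_mul_norm_prod (s : Multiset ℂ) {δ : ℝ}
    (hδ : 0 < δ) : ∃ M : ℝ, 0 ≤ M ∧ ∀ z, (∀ a ∈ s, δ ≤ ‖z - a‖) →
      (1 + ‖z‖) ^ s.card ≤ M * ‖(s.map (z - ·)).prod‖ := by
  induction s using Multiset.induction with
  | empty => exact ⟨1, zero_le_one, fun z _ => by simp⟩
  | cons a s ih =>
    obtain ⟨M, hM0, hM⟩ := ih
    refine ⟨((1 + ‖a‖) / δ + 1) * M, by positivity, fun z hz => ?_⟩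
    have hza : δ ≤ ‖z - a‖ := hz a (Multiset.mem_cons_self a s)
    have h1 : 1 + ‖z‖ ≤ ((1 + ‖a‖) / δ + 1) * ‖z - a‖ := by
      have h2 : 1 + ‖a‖ ≤ (1 + ‖a‖) / δ * ‖z - a‖ := by
        rw [div_mul_eq_mul_div, le_div_iff₀ hδ]
        gcongr
      have h3 : ‖z‖ ≤ ‖z - a‖ + ‖a‖ := by simpa using norm_add_le (z - a) a
      linarith
    rw [Multiset.card_cons, pow_succ', Multiset.map_cons, Multiset.prod_cons, norm_mul]
    calc (1 + ‖z‖) * (1 + ‖z‖) ^ s.card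
        ≤ (((1 + ‖a‖) / δ + 1) * ‖z - a‖) * (M * ‖(s.map (z - ·)).prod‖) := by
          gcongr
          exact hM z fun b hb => hz b (Multiset.mem_cons_of_mem hb)
      _ = _ := by ring

/-- If `deg P < deg Q`, then `(z - c) P(z) / Q(z)` is bounded, uniformly for bounded `c` and
for `z` away from the roots of `Q`. -/
lemma Polynomial.exists_norm_sub_mul_eval_le_mul_norm_eval {Q P : ℂ[X]} (hQ : Q.Monic)
    (hPQ : P.natDegree + 1 ≤ Q.natDegree) {B δ : ℝ} (hδ : 0 < δ) :
    ∃ C : ℝ, ∀ z c, ‖c‖ ≤ B → (∀ a, Q.IsRoot a → δ ≤ ‖z - a‖) →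
      ‖(z - c) * P.eval z‖ ≤ C * ‖Q.eval z‖ := by
  obtain ⟨A, hA0, hA⟩ :=
    P.exists_norm_eval_le_mul_one_add_norm_pow (d := Q.natDegree - 1) (by omega)
  obtain ⟨M, hM0, hM⟩ := Q.roots.exists_one_add_norm_pow_card_le_mul_norm_prod hδ
  refine ⟨(1 + B) * A * M, fun z c hc hz => ?_⟩
  have hB : 0 ≤ B := (norm_nonneg c).trans hc
  have hsplit : Q.Splits := IsAlgClosed.splits Q
  have hQz := hM z fun a ha => hz a (isRoot_of_mem_roots ha)
  rw [← hsplit.natDegree_eq_card_roots, ← hsplit.eval_eq_prod_roots_of_monic hQ] at hQz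
  have hzc : ‖z - c‖ ≤ (1 + B) * (1 + ‖z‖) := by
    have := norm_sub_le z c
    nlinarith [norm_nonneg z, mul_nonneg hB (norm_nonneg z)]
  rw [norm_mul]
  calc ‖z - c‖ * ‖P.eval z‖
      ≤ ((1 + B) * (1 + ‖z‖)) * (A * (1 + ‖z‖) ^ (Q.natDegree - 1)) := by
        gcongr
        exact hA z
    _ = (1 + B) * A * (1 + ‖z‖) ^ Q.natDegree := by
        obtain ⟨k, hk⟩ : ∃ k, Q.natDegree = k + 1 := ⟨Q.natDegree - 1, by omega⟩
        rw [hk, Nat.add_sub_cancel]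
        ring
    _ ≤ (1 + B) * A * (M * ‖Q.eval z‖) := by gcongr
    _ = _ := by ring

/-- Inversion in a circle centered at `c` and passing through `z` sends the disc to a
half-plane. -/
lemma Complex.half_le_re_sub_mul_one_div_sub {z c ζ : ℂ} (hne : z ≠ ζ)
    (h : ‖ζ - c‖ ≤ ‖z - c‖) : 1 / 2 ≤ ((z - c) * (1 / (z - ζ))).re := by
  have hpos : 0 < normSq (z - ζ) := normSq_pos.2 (sub_ne_zero.2 hne)
  have hsq : normSq (ζ - c) ≤ normSq (z - c) := by
    rw [normSq_eq_norm_sq, normSq_eq_norm_sq]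
    gcongr
  rw [mul_one_div, div_re, ← add_div, div_le_div_iff₀ two_pos hpos]
  simp only [normSq_apply, sub_re, sub_im] at *
  nlinarith

/-- If the roots of `f` lie in a closed disc with center `c` and `z` is not in its interior,
then the logarithmic derivative of `f` at `z` is bounded below in terms of the degree. -/
lemma Polynomial.natDegree_div_two_mul_norm_eval_le {f : ℂ[X]} {z c : ℂ} (hz : f.eval z ≠ 0)
    (h : ∀ ζ ∈ f.roots, ‖ζ - c‖ ≤ ‖z - c‖) :
    (f.natDegree : ℝ) / 2 * ‖f.eval z‖ ≤ ‖(z - c) * (derivative f).eval z‖ := by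
  have hsplit : f.Splits := IsAlgClosed.splits f
  have hlog := hsplit.eval_derivative_div_eval_of_ne_zero hz
  have hre : (f.natDegree : ℝ) / 2 ≤ ((z - c) * ((derivative f).eval z / f.eval z)).re := by
    rw [hlog, ← Multiset.sum_map_mul_left, ← Complex.coe_reAddGroupHom, map_multiset_sum,
      Multiset.map_map, hsplit.natDegree_eq_card_roots]
    have := Multiset.card_nsmul_le_sum
      (s := f.roots.map (Complex.reAddGroupHom ∘ fun ζ => (z - c) * (1 / (z - ζ))))
      (a := (1 / 2 : ℝ)) (by
        intro x hx
        obtain ⟨ζ, hζ, rfl⟩ := Multiset.mem_map.1 hx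
        refine Complex.half_le_re_sub_mul_one_div_sub ?_ (h ζ hζ)
        rintro rfl
        exact hz (isRoot_of_mem_roots hζ))
    simpa [div_eq_mul_inv] using this
  have hnorm := hre.trans (Complex.re_le_norm _)
  rwa [← mul_div_assoc, norm_div, le_div_iff₀ (norm_pos_iff.2 hz)] at hnorm

/-- Gauss–Lucas for a convex set containing all roots. -/
lemma Polynomial.mem_of_mem_roots_derivative_of_convex {S : ℂ[X]} (hS : 0 < S.natDegree)
    {T : Set ℂ} (hT : Convex ℝ T) (h : ∀ ζ ∈ S.roots, ζ ∈ T) {ζ : ℂ}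
    (hζ : (derivative S).IsRoot ζ) : ζ ∈ T := by
  have hS' : derivative S ≠ 0 := fun h0 => hS.ne' (derivative_eq_zero.1 h0)
  have hS0 : S ≠ 0 := by rintro rfl; simp at hS
  refine convexHull_min ?_ hT (rootSet_derivative_subset_convexHull_rootSet
    (natDegree_pos_iff_degree_pos.1 hS) (mem_rootSet.2 ⟨hS', by simpa using hζ⟩))
  intro ξ hξ
  exact h ξ ((mem_roots hS0).2 (by simpa using (mem_rootSet.1 hξ).2))

/-- A point `z` away from the roots of `Q` with `Q S'' + P S' = 0` at `z` and `S'(z) ≠ 0` can be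
at least as far from `c` as all roots of `S` only if `S` has small degree. -/
lemma Polynomial.exists_natDegree_le_of_roots_mem_closedBall {Q P : ℂ[X]} (hQ : Q.Monic)
    (hPQ : P.natDegree + 1 ≤ Q.natDegree) (B : ℝ) {δ : ℝ} (hδ : 0 < δ) :
    ∃ N : ℕ, ∀ (S : ℂ[X]) (z c : ℂ), ‖c‖ ≤ B → (∀ a, Q.IsRoot a → δ ≤ ‖z - a‖) →
      (derivative S).eval z ≠ 0 → (∀ ζ ∈ S.roots, ‖ζ - c‖ ≤ ‖z - c‖) →
      Q.eval z * (derivative (derivative S)).eval z + P.eval z * (derivative S).eval z = 0 →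
      S.natDegree ≤ N := by
  obtain ⟨C, hC⟩ := exists_norm_sub_mul_eval_le_mul_norm_eval hQ hPQ (B := B) hδ
  refine ⟨⌊2 * C⌋₊ + 1, fun S z c hc hz hS' hroots hode => ?_⟩
  rcases Nat.eq_zero_or_pos S.natDegree with h0 | hS
  · omega
  have hlow := natDegree_div_two_mul_norm_eval_le hS' (c := c) fun ζ hζ => by
    have := mem_of_mem_roots_derivative_of_convex hS (convex_closedBall c ‖z - c‖)
      (fun ξ hξ => by simpa [dist_eq_norm] using hroots ξ hξ) (isRoot_of_mem_roots hζ)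
    simpa [dist_eq_norm] using this
  have hQz : Q.eval z ≠ 0 := fun h => by
    have := hz z h
    rw [sub_self, norm_zero] at this
    linarith
  have hup := hC z c hc hz
  have heq : ‖Q.eval z‖ * ‖(z - c) * (derivative (derivative S)).eval z‖ =
      ‖(z - c) * P.eval z‖ * ‖(derivative S).eval z‖ := by
    rw [← norm_mul, ← norm_mul, ← norm_neg]
    congr 1
    linear_combination -(z - c) * hode
  have hQpos := norm_pos_iff.2 hQz
  have hSpos := norm_pos_iff.2 hS'
  have hdeg : ((derivative S).natDegree : ℝ) / 2 ≤ C := by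
    refine le_of_mul_le_mul_right ?_ (mul_pos hQpos hSpos)
    calc ((derivative S).natDegree : ℝ) / 2 * (‖Q.eval z‖ * ‖(derivative S).eval z‖)
        = ‖Q.eval z‖ * (((derivative S).natDegree : ℝ) / 2 * ‖(derivative S).eval z‖) := by ring
      _ ≤ ‖Q.eval z‖ * ‖(z - c) * (derivative (derivative S)).eval z‖ := by gcongr
      _ = ‖(z - c) * P.eval z‖ * ‖(derivative S).eval z‖ := heq
      _ ≤ C * ‖Q.eval z‖ * ‖(derivative S).eval z‖ := by gcongr
      _ = _ := by ring
  have hfloor : (derivative S).natDegree ≤ ⌊2 * C⌋₊ := Nat.le_floor (by linarith)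
  rw [natDegree_derivative] at hfloor
  omega

/-- A nonzero solution of `Q S'' + P S' + V S = 0` has only simple roots away from the roots
of `Q`. -/
lemma Polynomial.eval_derivative_ne_zero_of_isRoot {Q P V S : ℂ[X]} (hS : S ≠ 0)
    (hode : Q * derivative (derivative S) + P * derivative S + V * S = 0) {z : ℂ}
    (hQz : Q.eval z ≠ 0) (hz : S.IsRoot z) : (derivative S).eval z ≠ 0 := by
  intro hz'
  have hm : 1 < S.rootMultiplicity z := (one_lt_rootMultiplicity_iff_isRoot hS).2 ⟨hz, hz'⟩
  have hm' := derivative_rootMultiplicity_of_root hz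
  have hm'' := derivative_rootMultiplicity_of_root (p := derivative S) hz'
  have hS' : derivative S ≠ 0 := by
    intro h
    rw [h, rootMultiplicity_zero] at hm'
    omega
  have hS'' : derivative (derivative S) ≠ 0 := by
    intro h
    have hconst := derivative_eq_zero.1 h
    rw [natDegree_eq_zero] at hconst
    obtain ⟨a, ha⟩ := hconst
    rw [← ha, eval_C] at hz'
    exact hS' (by rw [← ha, hz', C_0])
  have hdvd : (X - C z) ^ (S.rootMultiplicity z - 1) ∣ Q * derivative (derivative S) := by
    have : Q * derivative (derivative S) = -(P * derivative S + V * S) := by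
      linear_combination hode
    rw [this, dvd_neg]
    refine dvd_add (Dvd.dvd.mul_left ?_ _) (Dvd.dvd.mul_left ?_ _)
    · exact (le_rootMultiplicity_iff hS').1 hm'.ge
    · exact (le_rootMultiplicity_iff hS).1 (Nat.sub_le _ _)
  have hcop : IsCoprime ((X - C z) ^ (S.rootMultiplicity z - 1)) Q := by
    refine IsCoprime.pow_left ((irreducible_X_sub_C z).coprime_iff_not_dvd.2 ?_)
    rwa [dvd_iff_isRoot]
  have := (le_rootMultiplicity_iff hS'').2 (hcop.dvd_of_dvd_mul_left hdvd)
  omega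

/-- The convex hull of the roots of a nonconstant polynomial is compact, convex and nonempty,
so points away from it are separated from it by balls with bounded centers. -/
lemma Polynomial.exists_bound_center_separating_ball_convexHull {Q : ℂ[X]}
    (hQ : 0 < Q.natDegree) {ε : ℝ} (hε : 0 < ε) :
    ∃ B : ℝ, ∀ z, ε ≤ Metric.infDist z (convexHull ℝ {w : ℂ | Q.IsRoot w}) → ∃ c, ‖c‖ ≤ B ∧
      ∀ w, Metric.infDist w (convexHull ℝ {w : ℂ | Q.IsRoot w}) ≤ ε / 2 →
        ‖w - c‖ < ‖z - c‖ := by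
  have hQ0 : Q ≠ 0 := by rintro rfl; simp at hQ
  obtain ⟨a, ha⟩ := IsAlgClosed.exists_root Q (natDegree_pos_iff_degree_pos.1 hQ).ne'
  exact exists_bound_center_separating_ball ((finite_setOfPred_isRoot hQ0).isCompact_convexHull ℝ)
    (convex_convexHull ℝ _) ⟨a, subset_convexHull ℝ _ ha⟩ hε

/-- A point away from the convex hull of the roots of `Q` is away from each root. -/
lemma Polynomial.le_norm_sub_of_le_infDist_convexHull {Q : ℂ[X]} {z : ℂ} {δ : ℝ}
    (h : δ ≤ Metric.infDist z (convexHull ℝ {w : ℂ | Q.IsRoot w})) (a : ℂ) (ha : Q.IsRoot a) :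
    δ ≤ ‖z - a‖ := by
  have hmem : a ∈ convexHull ℝ {w : ℂ | Q.IsRoot w} := subset_convexHull ℝ _ ha
  rw [← dist_eq_norm]
  exact h.trans (Metric.infDist_le_dist_of_mem hmem)

/-- The roots of solutions `S` of `Q S'' + P S' + V S = 0` of large degree are close to the
convex hull of the roots of `Q`. -/
lemma Polynomial.exists_forall_roots_infDist_convexHull_lt {Q P : ℂ[X]} (hQ : Q.Monic)
    (hPQ : P.natDegree + 1 ≤ Q.natDegree) {ε : ℝ} (hε : 0 < ε) :
    ∃ N : ℕ, ∀ V S : ℂ[X], N ≤ S.natDegree →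
      Q * derivative (derivative S) + P * derivative S + V * S = 0 →
      ∀ z ∈ S.roots, Metric.infDist z (convexHull ℝ {w : ℂ | Q.IsRoot w}) < ε := by
  obtain ⟨B, hB⟩ := exists_bound_center_separating_ball_convexHull (Q := Q) (by omega) hε
  obtain ⟨N, hN⟩ := exists_natDegree_le_of_roots_mem_closedBall hQ hPQ B (half_pos hε)
  refine ⟨N + 1, fun V S hS hode z hz => ?_⟩
  by_contra! hfar
  obtain ⟨c, hcB, hc⟩ := hB z hfar
  obtain ⟨z₁, hz₁, hmax⟩ := S.roots.toFinset.exists_max_image (fun ζ => ‖ζ - c‖)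
    ⟨z, Multiset.mem_toFinset.2 hz⟩
  rw [Multiset.mem_toFinset] at hz₁
  have hz₁far : ε / 2 ≤ Metric.infDist z₁ (convexHull ℝ {w : ℂ | Q.IsRoot w}) := by
    by_contra! hlt
    exact (hc z₁ hlt.le).not_ge (hmax z (Multiset.mem_toFinset.2 hz))
  have hroot : S.eval z₁ = 0 := isRoot_of_mem_roots hz₁
  have hsep := le_norm_sub_of_le_infDist_convexHull hz₁far
  have hQz₁ : Q.eval z₁ ≠ 0 := fun h => by
    have := hsep z₁ h
    rw [sub_self, norm_zero] at this
    linarith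
  have hle := hN S z₁ c hcB hsep
    (eval_derivative_ne_zero_of_isRoot (ne_zero_of_mem_roots hz₁) hode hQz₁ hroot)
    (fun ζ hζ => hmax ζ (Multiset.mem_toFinset.2 hζ))
    (by simpa [hroot] using congrArg (eval z₁) hode)
  omega

/-- Theorem 2 (part 2) of Shapiro–Takemura–Tater: for a monic cubic `Q` and `P` of degree
at most 2, for every `ε > 0` there is `N` such that for all `n ≥ N`, every root of every
Van Vleck polynomial `V` (of degree at most 1) admitting a Stieltjes polynomial `S` of
degree `n`, as well as every root of that `S`, lies within distance `ε` of the convex hull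
of the roots of `Q`. -/
theorem stmt0 (Q P : Polynomial ℂ) (hQmonic : Q.Monic) (hQdeg : Q.natDegree = 3)
    (hP : P.degree ≤ 2) :
    ∀ ε : ℝ, 0 < ε → ∃ N : ℕ, ∀ n : ℕ, N ≤ n →
      ∀ V S : Polynomial ℂ, V.degree ≤ 1 → S.natDegree = n →
        Q * (derivative (derivative S)) + P * (derivative S) + V * S = 0 →
        (∀ z ∈ V.roots, Metric.infDist z (convexHull ℝ {w : ℂ | Q.IsRoot w}) < ε) ∧
        (∀ z ∈ S.roots, Metric.infDist z (convexHull ℝ {w : ℂ | Q.IsRoot w}) < ε) := by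
  intro ε hε
  have hPQ : P.natDegree + 1 ≤ Q.natDegree := by
    have : P.natDegree ≤ 2 := natDegree_le_iff_degree_le.2 hP
    omega
  obtain ⟨N₁, hN₁⟩ := exists_forall_roots_infDist_convexHull_lt hQmonic hPQ (half_pos hε)
  obtain ⟨B, hB⟩ := exists_bound_center_separating_ball_convexHull (Q := Q) (by omega) hε
  obtain ⟨N₂, hN₂⟩ := exists_natDegree_le_of_roots_mem_closedBall hQmonic hPQ B hε
  refine ⟨N₁ + N₂ + 1, fun n hn V S _ hSn hode => ?_⟩
  have hS := hN₁ V S (by omega) hode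
  refine ⟨fun z hz => ?_, fun z hz => (hS z hz).trans (half_lt_self hε)⟩
  by_contra! hfar
  obtain ⟨c, hcB, hc⟩ := hB z hfar
  have hV : V.eval z = 0 := isRoot_of_mem_roots hz
  have hball : ∀ ζ ∈ S.roots, ‖ζ - c‖ < ‖z - c‖ := fun ζ hζ => hc ζ (hS ζ hζ).le
  have hS' : (derivative S).eval z ≠ 0 := fun h => by
    have := mem_of_mem_roots_derivative_of_convex (by omega) (convex_ball c ‖z - c‖)
      (fun ζ hζ => by simpa [dist_eq_norm] using hball ζ hζ) h
    simp [dist_eq_norm] at this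
  have hle := hN₂ S z c hcB (le_norm_sub_of_le_infDist_convexHull hfar) hS'
    (fun ζ hζ => (hball ζ hζ).le) (by simpa [hV] using congrArg (eval z) hode)
  omega
end

section
/- Let Q be a monic cubic complex polynomial and P a complex polynomial of degree at most 2. There exists N such that for every n ≥ N, the set 𝒱_n of complex polynomials V with deg V ≤ 1 for which the equation Q·S'' + P·S' + V·S = 0 admits a polynomial solution S of degree exactly n is nonempty and finite, with at most n+1 elements. -/
open Polynomial

/-- The second-order operator `S ↦ Q S'' + P S' + V S` on polynomials. -/
noncomputable def heunOperator (Q P V : ℂ[X]) : ℂ[X] →ₗ[ℂ] ℂ[X] :=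
  LinearMap.mulLeft ℂ Q ∘ₗ derivative ∘ₗ derivative + LinearMap.mulLeft ℂ P ∘ₗ derivative +
    LinearMap.mulLeft ℂ V

theorem heunOperator_apply (Q P V S : ℂ[X]) :
    heunOperator Q P V S = Q * derivative (derivative S) + P * derivative S + V * S := rfl

theorem coeff_succ_heunOperator {Q P V S : ℂ[X]} {m : ℕ} (hQmonic : Q.Monic)
    (hQdeg : Q.natDegree = 3) (hP : P.natDegree ≤ 2) (hV : V.natDegree ≤ 1)
    (hS : S.natDegree ≤ m) :
    (heunOperator Q P V S).coeff (m + 1) =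
      ((m : ℂ) * (m - 1) + P.coeff 2 * m + V.coeff 1) * S.coeff m := by
  have hQ3 : Q.coeff 3 = 1 := by rw [← hQdeg]; exact hQmonic
  have hVS : (V * S).coeff (m + 1) = V.coeff 1 * S.coeff m := by
    rw [add_comm, coeff_mul_add_eq_of_natDegree_le hV hS]
  have hPS : (P * derivative S).coeff (m + 1) = P.coeff 2 * m * S.coeff m := by
    rcases m with _ | m
    · rw [natDegree_eq_zero.1 (Nat.le_zero.1 hS) |>.choose_spec.symm]
      simp
    · have hS' : (derivative S).natDegree ≤ m := (natDegree_derivative_le S).trans (by omega)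
      rw [show m + 1 + 1 = 2 + m by ring, coeff_mul_add_eq_of_natDegree_le hP hS', coeff_derivative]
      push_cast
      ring
  have hQS : (Q * derivative (derivative S)).coeff (m + 1) = (m : ℂ) * (m - 1) * S.coeff m := by
    by_cases hm : m < 2
    · have h2 : derivative (derivative S) = 0 :=
        iterate_derivative_eq_zero (x := 2) (hS.trans_lt hm)
      rw [h2]
      interval_cases m <;> simp
    · obtain ⟨m, rfl⟩ := Nat.exists_eq_add_of_le' (not_lt.1 hm)
      have hS' : (derivative (derivative S)).natDegree ≤ m :=
        (natDegree_iterate_derivative S 2).trans (by omega)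
      rw [show m + 2 + 1 = 3 + m by ring, coeff_mul_add_eq_of_natDegree_le hQdeg.le hS',
        coeff_derivative, coeff_derivative, hQ3]
      push_cast
      ring
  rw [heunOperator_apply, coeff_add, coeff_add, hQS, hPS, hVS]
  ring

/-- The only possible leading coefficient of a linear `V` for which `Q S'' + P S' + V S = 0`
has a solution `S` of degree `n`, where `Q` is a monic cubic. -/
noncomputable def vanVleckLeading (P : ℂ[X]) (n : ℕ) : ℂ := -((n : ℂ) * (n - 1) + P.coeff 2 * n)

theorem heunOperator_mem_degreeLT {Q P : ℂ[X]} (hQmonic : Q.Monic)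
    (hQdeg : Q.natDegree = 3) (hP : P.natDegree ≤ 2) (n : ℕ) {S : ℂ[X]}
    (hS : S ∈ degreeLT ℂ (n + 1)) :
    heunOperator Q P (C (vanVleckLeading P n) * X) S ∈ degreeLT ℂ (n + 1) := by
  rw [mem_degreeLT, degree_lt_iff_coeff_zero] at hS ⊢
  intro k hk
  obtain ⟨k, rfl⟩ := Nat.exists_eq_add_of_le' (Nat.le_of_add_left_le hk)
  have hSk : S.natDegree ≤ k := natDegree_le_iff_coeff_eq_zero.2 fun j hj => hS j (by omega)
  rw [coeff_succ_heunOperator hQmonic hQdeg hP ((natDegree_C_mul_le _ _).trans natDegree_X_le) hSk]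
  rcases (show n ≤ k by omega).eq_or_lt with rfl | hlt
  · simp [vanVleckLeading]
  · rw [hS k hlt, mul_zero]

/-- Theorem 2 (part 1): for a monic cubic `Q` and `P` of degree at most 2, there is `N`
such that for every `n ≥ N` the set of Van Vleck polynomials `V` of degree at most 1
admitting a polynomial solution `S` of degree exactly `n` of the Heun equation
`Q S'' + P S' + V S = 0` is nonempty and finite with at most `n + 1` elements. -/
theorem stmt1 (Q P : Polynomial ℂ) (hQmonic : Q.Monic) (hQdeg : Q.natDegree = 3)
    (hP : P.degree ≤ 2) :
    ∃ N : ℕ, ∀ n : ℕ, N ≤ n →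
      ({V : Polynomial ℂ | V.degree ≤ 1 ∧ ∃ S : Polynomial ℂ, S.degree = (n : WithBot ℕ) ∧
          Q * (derivative (derivative S)) + P * (derivative S) + V * S = 0}).Nonempty ∧
      ({V : Polynomial ℂ | V.degree ≤ 1 ∧ ∃ S : Polynomial ℂ, S.degree = (n : WithBot ℕ) ∧
          Q * (derivative (derivative S)) + P * (derivative S) + V * S = 0}).Finite ∧
      ({V : Polynomial ℂ | V.degree ≤ 1 ∧ ∃ S : Polynomial ℂ, S.degree = (n : WithBot ℕ) ∧
          Q * (derivative (derivative S)) + P * (derivative S) + V * S = 0}).ncard ≤ n + 1 := by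
  have hP' : P.natDegree ≤ 2 := natDegree_le_of_degree_le hP
  obtain ⟨N, hN⟩ := exists_nat_gt (‖P.coeff 2‖ + 1)
  refine ⟨N, fun n hn => ?_⟩
  set a := vanVleckLeading P n with ha
  let T : Module.End ℂ (degreeLT ℂ (n + 1)) :=
    (heunOperator Q P (C a * X)).restrict fun _ hS =>
      heunOperator_mem_degreeLT hQmonic hQdeg hP' n hS
  have hfin : FiniteDimensional ℂ (degreeLT ℂ (n + 1)) :=
    Module.Finite.equiv (degreeLTEquiv ℂ (n + 1)).symm
  have hrank : Module.finrank ℂ (degreeLT ℂ (n + 1)) = n + 1 := by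
    rw [(degreeLTEquiv ℂ (n + 1)).finrank_eq, Module.finrank_fin_fun]
  have hsplit (μ : ℂ) (S : ℂ[X]) :
      heunOperator Q P (C a * X - C μ) S = heunOperator Q P (C a * X) S - μ • S := by
    rw [heunOperator_apply, heunOperator_apply, smul_eq_C_mul]
    ring
  have hdeg (μ : ℂ) : (C a * X - C μ).natDegree ≤ 1 := by
    simpa [sub_eq_add_neg] using natDegree_linear_le (a := a) (b := -μ)
  constructor
  · have : Nontrivial (degreeLT ℂ (n + 1)) :=
      Module.nontrivial_of_finrank_pos (R := ℂ) (by omega)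
    obtain ⟨μ, hμ⟩ := Module.End.exists_eigenvalue T
    obtain ⟨⟨S, hSmem⟩, hS⟩ := hμ.exists_hasEigenvector
    have hS0 : S ≠ 0 := fun h => hS.2 (Subtype.ext h)
    have hzero : heunOperator Q P (C a * X - C μ) S = 0 := by
      rw [hsplit, sub_eq_zero]
      exact congrArg Subtype.val hS.apply_eq_smul
    refine ⟨C a * X - C μ, degree_le_of_natDegree_le (hdeg μ), S, ?_, hzero⟩
    rw [degree_eq_natDegree hS0, Nat.cast_inj]
    have hle : S.natDegree ≤ n := by
      rw [mem_degreeLT, ← natDegree_lt_iff_degree_lt hS0] at hSmem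
      omega
    have hcoeff := coeff_succ_heunOperator hQmonic hQdeg hP' (hdeg μ) (le_refl S.natDegree)
    rw [hzero, coeff_zero, eq_comm, mul_eq_zero, or_iff_left (by simpa using hS0)] at hcoeff
    simp only [coeff_sub, coeff_C_mul, coeff_X_one, mul_one, coeff_C_succ, sub_zero, ha,
      vanVleckLeading] at hcoeff
    have hprod : ((S.natDegree : ℂ) - n) * (n + S.natDegree - 1 + P.coeff 2) = 0 := by
      linear_combination hcoeff
    rcases mul_eq_zero.1 hprod with h | h
    · exact_mod_cast sub_eq_zero.1 h
    · exfalso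
      have hre : (n : ℝ) + S.natDegree - 1 + (P.coeff 2).re = 0 := by
        simpa using congrArg Complex.re h
      have habs := (abs_le.1 (Complex.abs_re_le_norm (P.coeff 2))).1
      have hNn : (N : ℝ) ≤ n := by exact_mod_cast hn
      have hnonneg : (0 : ℝ) ≤ S.natDegree := Nat.cast_nonneg _
      linarith
  · have hsub : {V : Polynomial ℂ | V.degree ≤ 1 ∧ ∃ S : Polynomial ℂ,
        S.degree = (n : WithBot ℕ) ∧
          Q * (derivative (derivative S)) + P * (derivative S) + V * S = 0} ⊆
        (T.charpoly.roots.toFinset.image fun μ => C a * X - C μ : Finset ℂ[X]) := by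
      rintro V ⟨hVdeg, S, hSdeg, hVS⟩
      rw [← heunOperator_apply] at hVS
      have hS0 : S ≠ 0 := by
        rintro rfl
        simp at hSdeg
      have hSnat : S.natDegree = n := natDegree_eq_of_degree_eq_some hSdeg
      have hVnat : V.natDegree ≤ 1 := natDegree_le_of_degree_le hVdeg
      have hcoeff := coeff_succ_heunOperator hQmonic hQdeg hP' hVnat hSnat.le
      rw [hVS, coeff_zero, eq_comm, mul_eq_zero,
        or_iff_left (by rw [← hSnat]; simpa using hS0)] at hcoeff
      have hV1 : V.coeff 1 = a := by
        rw [ha, vanVleckLeading]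
        linear_combination hcoeff
      have hV : V = C a * X - C (-V.coeff 0) := by
        rw [C_neg, sub_neg_eq_add, ← hV1]
        exact eq_X_add_C_of_natDegree_le_one hVnat
      have hSmem : S ∈ degreeLT ℂ (n + 1) := by
        rw [mem_degreeLT, hSdeg]
        exact_mod_cast n.lt_succ_self
      rw [hV, hsplit, sub_eq_zero] at hVS
      have heig : T.HasEigenvalue (-V.coeff 0) :=
        Module.End.hasEigenvalue_of_hasEigenvector (x := ⟨S, hSmem⟩)
          ⟨Module.End.mem_eigenspace_iff.2 (Subtype.ext hVS),
            fun h => hS0 (congrArg Subtype.val h)⟩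
      rw [Finset.mem_coe, Finset.mem_image]
      refine ⟨-V.coeff 0, ?_, hV.symm⟩
      rw [Multiset.mem_toFinset, mem_roots T.charpoly_monic.ne_zero]
      exact (Module.End.hasEigenvalue_iff_isRoot_charpoly T _).1 heig
    refine ⟨(Finset.finite_toSet _).subset hsub, ?_⟩
    calc _ ≤ _ := Set.ncard_le_ncard hsub (Finset.finite_toSet _)
      _ = _ := Set.ncard_coe_finset _
      _ ≤ _ := Finset.card_image_le
      _ ≤ _ := Multiset.toFinset_card_le _
      _ ≤ _ := card_roots' _
      _ = n + 1 := by rw [LinearMap.charpoly_natDegree, hrank]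
end

section
/- Let Q be a monic cubic complex polynomial with three distinct roots a₁, a₂, a₃ and let P be a complex polynomial of degree at most 2 such that for each i the residue P(a_i)/Q'(a_i) of the rational function P/Q at a_i is a positive real number. Then for any complex polynomials V with deg V ≤ 1 and any nonzero polynomial S satisfying Q·S'' + P·S' + V·S = 0 identically, every root of V and every root of S lies in the convex hull Δ_Q of {a₁, a₂, a₃}. -/
open Polynomial

/-- A real-linear functional applied to the conjugate of an inverse is a positive multiple of
its value at the original point. -/
lemma map_conj_inv (f : ℂ →L[ℝ] ℝ) (u : ℂ) :
    f ((starRingEnd ℂ) u⁻¹) = (Complex.normSq u)⁻¹ * f u := by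
  have h : (starRingEnd ℂ) u⁻¹ = (Complex.normSq u)⁻¹ • u := by
    rw [Complex.inv_def, map_mul, Complex.conj_conj, Complex.conj_ofReal, Complex.real_smul,
      mul_comm]
  rw [h, map_smul, smul_eq_mul]

/-- The logarithmic derivative of a polynomial at a point lying weakly beyond all its roots in
the direction of `f` has a weakly positive conjugate. -/
lemma map_conj_logDeriv_nonneg (f : ℂ →L[ℝ] ℝ) {T : ℂ[X]} {z : ℂ} (hz : T.eval z ≠ 0)
    (hf : ∀ w ∈ T.roots, f w ≤ f z) :
    0 ≤ f ((starRingEnd ℂ) ((derivative T).eval z / T.eval z)) := by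
  rw [(IsAlgClosed.splits T).eval_derivative_div_eval_of_ne_zero hz]
  have h : f ((starRingEnd ℂ) (T.roots.map fun w ↦ 1 / (z - w)).sum) =
      (T.roots.map fun w ↦ (Complex.normSq (z - w))⁻¹ * f (z - w)).sum := by
    have := map_multiset_sum ((f : ℂ →+ ℝ).comp (starRingEnd ℂ : ℂ →+ ℂ))
      (T.roots.map fun w ↦ 1 / (z - w))
    simp only [AddMonoidHom.coe_comp, Multiset.map_map] at this
    refine this.trans (congrArg _ (Multiset.map_congr rfl fun w _ ↦ ?_))
    simpa using map_conj_inv f (z - w)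
  rw [h]
  refine Multiset.sum_nonneg fun x hx ↦ ?_
  obtain ⟨w, hw, rfl⟩ := Multiset.mem_map.1 hx
  refine mul_nonneg (inv_nonneg.2 (Complex.normSq_nonneg _)) ?_
  rw [map_sub]
  exact sub_nonneg.2 (hf w hw)

/-- Partial fraction decomposition of `P / Q` for a cubic `Q` with distinct roots. -/
lemma eval_div_eval_eq_sum_residues {a : Fin 3 → ℂ} (hinj : Function.Injective a)
    {Q P : ℂ[X]} (hQ : Q = (X - C (a 0)) * (X - C (a 1)) * (X - C (a 2)))
    (hP : P.degree ≤ 2) {z : ℂ} (hz : ∀ i, z ≠ a i) :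
    P.eval z / Q.eval z =
      ∑ i, P.eval (a i) / (derivative Q).eval (a i) * (z - a i)⁻¹ := by
  have hPe (w : ℂ) : P.eval w = P.coeff 0 + P.coeff 1 * w + P.coeff 2 * w ^ 2 := by
    rw [eval_eq_sum_range' (n := 3) (Nat.lt_succ_of_le (natDegree_le_of_degree_le hP))]
    simp [Finset.sum_range_succ]
  have hne {i j : Fin 3} (hij : i ≠ j) : a i - a j ≠ 0 := sub_ne_zero.2 (hinj.ne hij)
  have h01 := hne (show (0 : Fin 3) ≠ 1 by decide)
  have h02 := hne (show (0 : Fin 3) ≠ 2 by decide)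
  have h10 := hne (show (1 : Fin 3) ≠ 0 by decide)
  have h12 := hne (show (1 : Fin 3) ≠ 2 by decide)
  have h20 := hne (show (2 : Fin 3) ≠ 0 by decide)
  have h21 := hne (show (2 : Fin 3) ≠ 1 by decide)
  have h0 := sub_ne_zero.2 (hz 0)
  have h1 := sub_ne_zero.2 (hz 1)
  have h2 := sub_ne_zero.2 (hz 2)
  simp only [hPe, hQ, Fin.sum_univ_three, derivative_mul, derivative_sub, derivative_X,
    derivative_C, eval_add, eval_mul, eval_sub, eval_X, eval_C, sub_zero, one_mul, mul_one,
    sub_self, zero_mul, mul_zero, zero_add, add_zero]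
  rw [← neg_sub (a 0) (a 1), ← neg_sub (a 0) (a 2), ← neg_sub (a 1) (a 2)]
  field_simp
  ring

/-- Strict positivity of the conjugate of `P / Q` beyond the roots of `Q`. -/
lemma map_conj_eval_div_pos {a : Fin 3 → ℂ} (hinj : Function.Injective a)
    {Q P : ℂ[X]} (hQ : Q = (X - C (a 0)) * (X - C (a 1)) * (X - C (a 2)))
    (hP : P.degree ≤ 2)
    (hres : ∀ i : Fin 3,
      0 < (P.eval (a i) / (derivative Q).eval (a i)).re ∧
      (P.eval (a i) / (derivative Q).eval (a i)).im = 0)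
    (f : ℂ →L[ℝ] ℝ) {z : ℂ} (hf : ∀ i, f (a i) < f z) :
    0 < f ((starRingEnd ℂ) (P.eval z / Q.eval z)) := by
  have hz (i : Fin 3) : z ≠ a i := fun h ↦ (hf i).ne (by rw [h])
  rw [eval_div_eval_eq_sum_residues hinj hQ hP hz, map_sum, map_sum]
  refine Finset.sum_pos (fun i _ ↦ ?_) Finset.univ_nonempty
  obtain ⟨hre, him⟩ := hres i
  have hr : P.eval (a i) / (derivative Q).eval (a i) =
      ((P.eval (a i) / (derivative Q).eval (a i)).re : ℂ) := Complex.ext rfl (by simpa using him)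
  rw [hr, map_mul, Complex.conj_ofReal, ← Complex.real_smul, map_smul, map_conj_inv, smul_eq_mul,
    map_sub f]
  exact mul_pos hre (mul_pos (inv_pos.2 (Complex.normSq_pos.2 (sub_ne_zero.2 (hz i))))
    (sub_pos.2 (hf i)))

/-- `c Q T' + P T` does not vanish at a point weakly beyond the roots of `T` and strictly beyond
the roots of `Q`. -/
lemma mul_eval_derivative_add_ne_zero {a : Fin 3 → ℂ} (hinj : Function.Injective a)
    {Q P : ℂ[X]} (hQ : Q = (X - C (a 0)) * (X - C (a 1)) * (X - C (a 2)))
    (hP : P.degree ≤ 2)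
    (hres : ∀ i : Fin 3,
      0 < (P.eval (a i) / (derivative Q).eval (a i)).re ∧
      (P.eval (a i) / (derivative Q).eval (a i)).im = 0)
    (f : ℂ →L[ℝ] ℝ) {z : ℂ} (hf : ∀ i, f (a i) < f z) {T : ℂ[X]} (hT : T.eval z ≠ 0)
    (hroots : ∀ w ∈ T.roots, f w ≤ f z) {c : ℝ} (hc : 0 ≤ c) :
    c * Q.eval z * (derivative T).eval z + P.eval z * T.eval z ≠ 0 := by
  intro h
  have hz (i : Fin 3) : z - a i ≠ 0 := sub_ne_zero.2 fun h ↦ (hf i).ne (by rw [h])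
  have hQz : Q.eval z ≠ 0 := by
    simpa [hQ] using ⟨⟨hz 0, hz 1⟩, hz 2⟩
  have hsum : c • ((derivative T).eval z / T.eval z) + P.eval z / Q.eval z = 0 := by
    rw [Complex.real_smul]
    field_simp
    linear_combination h
  have hmap := congrArg (fun u ↦ f ((starRingEnd ℂ) u)) hsum
  simp only [Complex.real_smul, map_add, map_mul, Complex.conj_ofReal, map_zero] at hmap
  rw [← Complex.real_smul, map_smul, smul_eq_mul] at hmap
  have h1 := mul_nonneg hc (map_conj_logDeriv_nonneg f hT hroots)
  have h2 := map_conj_eval_div_pos hinj hQ hP hres f hf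
  linarith

/-- A point outside a triangle is strictly separated from its vertices. -/
lemma exists_separating_functional {a : Fin 3 → ℂ} {z : ℂ}
    (hz : z ∉ convexHull ℝ ({a 0, a 1, a 2} : Set ℂ)) :
    ∃ f : ℂ →L[ℝ] ℝ, ∀ w ∈ convexHull ℝ ({a 0, a 1, a 2} : Set ℂ), f w < f z := by
  have hclosed : IsClosed (convexHull ℝ ({a 0, a 1, a 2} : Set ℂ)) :=
    (Set.toFinite _).isClosed_convexHull ℝ
  obtain ⟨f, u, hu, huz⟩ := geometric_hahn_banach_closed_point (convex_convexHull ℝ _) hclosed hz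
  exact ⟨f, fun w hw ↦ (hu w hw).trans huz⟩

lemma vertex_mem_convexHull (a : Fin 3 → ℂ) (i : Fin 3) :
    a i ∈ convexHull ℝ ({a 0, a 1, a 2} : Set ℂ) := by
  apply subset_convexHull
  fin_cases i <;> simp

/-- At a regular point of a second order equation, a nonzero polynomial solution has only simple
roots. -/
lemma exists_eq_mul_of_second_order_eq {Q P V S : ℂ[X]} (hS : S ≠ 0)
    (heq : Q * (derivative (derivative S)) + P * (derivative S) + V * S = 0) {y : ℂ}
    (hy : S.IsRoot y) (hQy : Q.eval y ≠ 0) :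
    ∃ T, S = (X - C y) * T ∧ T.eval y ≠ 0 := by
  obtain ⟨T, hST, hT⟩ := exists_eq_pow_rootMultiplicity_mul_and_not_dvd S hS y
  rw [dvd_iff_isRoot] at hT
  have hpos := (rootMultiplicity_pos hS).2 hy
  generalize rootMultiplicity y S = m at hST hpos
  obtain _ | _ | k := m
  · simp at hpos
  · exact ⟨T, by simpa using hST, hT⟩
  · exfalso
    subst hST
    have hfactor : (X - C y) ^ k * (Q * (((k : ℂ[X]) + 2) * ((k : ℂ[X]) + 1) * T
        + 2 * ((k : ℂ[X]) + 2) * (X - C y) * derivative T + (X - C y) ^ 2 * derivative (derivative T))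
        + P * ((X - C y) * (((k : ℂ[X]) + 2) * T + (X - C y) * derivative T))
        + V * ((X - C y) ^ 2 * T)) = 0 := by
      rw [← heq]
      simp only [derivative_mul, derivative_X_sub_C_pow, derivative_add,
        Nat.add_sub_cancel, map_natCast, derivative_natCast]
      push_cast
      ring
    have h := congrArg (eval y)
      ((mul_eq_zero.1 hfactor).resolve_left (pow_ne_zero _ (X_sub_C_ne_zero y)))
    have hk1 : (k : ℂ) + 1 ≠ 0 := by exact_mod_cast k.succ_ne_zero
    have hk2 : (k : ℂ) + 2 ≠ 0 := by exact_mod_cast (k + 1).succ_ne_zero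
    simp [hQy, hk1, hk2] at h
    exact hT h

/-- Roots of Stieltjes polynomials lie in the triangle spanned by the singular points. -/
lemma stieltjes_root_mem_convexHull {a : Fin 3 → ℂ} (hinj : Function.Injective a)
    {Q P V S : ℂ[X]} (hQ : Q = (X - C (a 0)) * (X - C (a 1)) * (X - C (a 2)))
    (hP : P.degree ≤ 2)
    (hres : ∀ i : Fin 3,
      0 < (P.eval (a i) / (derivative Q).eval (a i)).re ∧
      (P.eval (a i) / (derivative Q).eval (a i)).im = 0)
    (hS : S ≠ 0)
    (heq : Q * (derivative (derivative S)) + P * (derivative S) + V * S = 0) {z : ℂ}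
    (hz : z ∈ S.roots) : z ∈ convexHull ℝ ({a 0, a 1, a 2} : Set ℂ) := by
  by_contra hzK
  obtain ⟨f, hf⟩ := exists_separating_functional hzK
  obtain ⟨y, hy, hmax⟩ := S.roots.toFinset.exists_max_image f ⟨z, by simpa using hz⟩
  simp only [Multiset.mem_toFinset] at hy hmax
  have hfa (i : Fin 3) : f (a i) < f y :=
    (hf _ (vertex_mem_convexHull a i)).trans_le (hmax z hz)
  have hQy : Q.eval y ≠ 0 := by
    have hya (i : Fin 3) : y - a i ≠ 0 := sub_ne_zero.2 fun h ↦ (hfa i).ne (by rw [h])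
    simpa [hQ] using ⟨⟨hya 0, hya 1⟩, hya 2⟩
  obtain ⟨T, rfl, hT⟩ : ∃ T, S = (X - C y) * T ∧ T.eval y ≠ 0 :=
    exists_eq_mul_of_second_order_eq hS heq (isRoot_of_mem_roots hy) hQy
  refine mul_eval_derivative_add_ne_zero hinj hQ hP hres f hfa hT
    (fun w hw ↦ hmax w ?_) (c := 2) zero_le_two ?_
  · rw [roots_mul hS]
    exact Multiset.mem_add.2 (Or.inr hw)
  · have h := congrArg (eval y) heq
    simp at h
    push_cast
    linear_combination h

/-- Pólya's theorem for the Heun equation: if `Q` is a monic cubic with distinct roots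
`a 0, a 1, a 2`, `P` has degree at most 2, and all residues `P(aᵢ)/Q'(aᵢ)` of `P/Q` are
positive real numbers, then every root of every Van Vleck polynomial `V` (deg ≤ 1) and of
every nonzero Stieltjes polynomial `S` solving `Q S'' + P S' + V S = 0` lies in the convex
hull of `{a 0, a 1, a 2}`. -/
theorem stmt2 (a : Fin 3 → ℂ) (hinj : Function.Injective a)
    (Q : Polynomial ℂ) (hQ : Q = (X - C (a 0)) * (X - C (a 1)) * (X - C (a 2)))
    (P : Polynomial ℂ) (hP : P.degree ≤ 2)
    (hres : ∀ i : Fin 3,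
      0 < (P.eval (a i) / (derivative Q).eval (a i)).re ∧
      (P.eval (a i) / (derivative Q).eval (a i)).im = 0)
    (V S : Polynomial ℂ) (hV : V.degree ≤ 1) (hS : S ≠ 0)
    (heq : Q * (derivative (derivative S)) + P * (derivative S) + V * S = 0) :
    (∀ z ∈ V.roots, z ∈ convexHull ℝ ({a 0, a 1, a 2} : Set ℂ)) ∧
    (∀ z ∈ S.roots, z ∈ convexHull ℝ ({a 0, a 1, a 2} : Set ℂ)) := by
  have hroots : ∀ z ∈ S.roots, z ∈ convexHull ℝ ({a 0, a 1, a 2} : Set ℂ) :=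
    fun z hz ↦ stieltjes_root_mem_convexHull hinj hQ hP hres hS heq hz
  refine ⟨fun z hz ↦ ?_, hroots⟩
  have hV0 : V ≠ 0 := ne_zero_of_mem_roots hz
  have hS' : derivative S ≠ 0 := by
    intro h
    simp [h, hV0, hS] at heq
  have hdeg : 0 < S.degree := by
    by_contra hd
    exact hS' (by rw [eq_C_of_degree_le_zero (not_lt.1 hd), derivative_C])
  have hS'roots : ∀ w ∈ (derivative S).roots, w ∈ convexHull ℝ ({a 0, a 1, a 2} : Set ℂ) := by
    intro w hw
    refine convexHull_min ?_ (convex_convexHull ℝ _)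
      (rootSet_derivative_subset_convexHull_rootSet hdeg
        ((mem_rootSet.2 ⟨hS', by simpa using isRoot_of_mem_roots hw⟩)))
    intro x hx
    exact hroots x ((mem_roots hS).2 (by simpa using (mem_rootSet.1 hx).2))
  by_contra hzK
  obtain ⟨f, hf⟩ := exists_separating_functional hzK
  have hT : (derivative S).eval z ≠ 0 := fun h ↦ hzK (hS'roots z ((mem_roots hS').2 h))
  refine mul_eval_derivative_add_ne_zero hinj hQ hP hres f
    (fun i ↦ hf _ (vertex_mem_convexHull a i)) hT (fun w hw ↦ (hf w (hS'roots w hw)).le)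
    (c := 1) zero_le_one ?_
  have h := congrArg (eval z) heq
  have hVz : V.eval z = 0 := isRoot_of_mem_roots hz
  simpa [hVz] using h
end

section
/- Let h : ℂ → ℂ be a locally integrable measurable function such that h(z) → 0 as |z| → ∞ and such that for every smooth compactly supported function φ : ℂ → ℂ one has ∫_ℂ h(z)·(∂φ/∂z̄)(z) dλ(z) = 0 (i.e., ∂h/∂z̄ = 0 in the sense of distributions). Then h = 0 Lebesgue-almost everywhere. -/
open MeasureTheory

/-- The Wirtinger derivative `∂φ/∂z̄ = (1/2)(∂φ/∂x + i ∂φ/∂y)` of a map `φ : ℂ → ℂ`,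
expressed via the real Fréchet derivative in the directions `1` and `I`. -/
noncomputable def dbar (φ : ℂ → ℂ) (z : ℂ) : ℂ :=
  (1 / 2 : ℂ) * (fderiv ℝ φ z 1 + Complex.I * fderiv ℝ φ z Complex.I)

open scoped Convolution

/-- The convolution of a function vanishing at infinity with a continuous compactly supported
function vanishes at infinity. -/
theorem tendsto_convolution_cocompact_zero {h ρ : ℂ → ℂ}
    (h0 : Filter.Tendsto h (Filter.cocompact ℂ) (nhds 0))
    (hρ : Continuous ρ) (hcρ : HasCompactSupport ρ) :
    Filter.Tendsto (h ⋆[ContinuousLinearMap.mul ℝ ℂ, volume] ρ) (Filter.cocompact ℂ) (nhds 0) := by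
  have hint : Integrable (fun t => ‖ρ t‖) := (hρ.integrable_of_hasCompactSupport hcρ).norm
  rw [Metric.tendsto_nhds]
  intro ε hε
  set M : ℝ := ∫ t, ‖ρ t‖ with hM
  have hM0 : 0 ≤ M := integral_nonneg fun t => norm_nonneg _
  have hδ : 0 < ε / (M + 1) := by positivity
  obtain ⟨K, hK, hKh⟩ := Filter.mem_cocompact.1 (Metric.tendsto_nhds.1 h0 _ hδ)
  filter_upwards [(hK.add hcρ.isCompact).compl_mem_cocompact] with x hx
  have hbound : ‖∫ t, h (x - t) * ρ t‖ ≤ ∫ t, ε / (M + 1) * ‖ρ t‖ := by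
    refine norm_integral_le_of_norm_le (hint.const_mul _) (Filter.Eventually.of_forall fun t => ?_)
    by_cases ht : t ∈ tsupport ρ
    · have hxt : x - t ∉ K := fun hxK => hx ⟨x - t, hxK, t, ht, sub_add_cancel x t⟩
      have hsmall : dist (h (x - t)) 0 < ε / (M + 1) := hKh hxt
      rw [dist_zero_right] at hsmall
      rw [norm_mul]
      gcongr
    · simp [image_eq_zero_of_notMem_tsupport ht]
  rw [integral_const_mul, ← hM] at hbound
  rw [dist_zero_right, convolution_eq_swap]
  refine hbound.trans_lt ?_
  rw [div_mul_eq_mul_div, div_lt_iff₀ (by positivity)]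
  nlinarith

/-- The `∂̄`-derivative of a reflected translate. -/
theorem dbar_comp_const_sub {φ : ℂ → ℂ} {x t : ℂ} (hφ : DifferentiableAt ℝ φ (x - t)) :
    dbar (fun s => φ (x - s)) t = -dbar φ (x - t) := by
  have hder : fderiv ℝ (fun s => φ (x - s)) t = (fderiv ℝ φ (x - t)).comp (-.id ℝ ℂ) :=
    (hφ.hasFDerivAt.comp t ((hasFDerivAt_id t).const_sub x)).fderiv
  simp only [dbar, hder, ContinuousLinearMap.comp_apply, neg_apply,
    ContinuousLinearMap.id_apply, map_neg]
  ring

/-- A distributional solution of `∂h/∂z̄ = 0` becomes holomorphic after mollification. -/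
theorem differentiable_convolution_of_integral_mul_dbar_eq_zero {h ρ : ℂ → ℂ}
    (hloc : LocallyIntegrable h volume)
    (hdist : ∀ φ : ℂ → ℂ, ContDiff ℝ (⊤ : ℕ∞) φ → HasCompactSupport φ →
      ∫ z, h z * dbar φ z = 0)
    (hρ : ContDiff ℝ (⊤ : ℕ∞) ρ) (hcρ : HasCompactSupport ρ) :
    Differentiable ℂ (h ⋆[ContinuousLinearMap.mul ℝ ℂ, volume] ρ) := by
  intro x
  set L := ContinuousLinearMap.mul ℝ ℂ
  have hρ1 : ContDiff ℝ 1 ρ := hρ.of_le (by exact_mod_cast le_top)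
  have hder := hcρ.hasFDerivAt_convolution_right L hloc hρ1 x
  have hcont : Continuous (fderiv ℝ ρ) := hρ1.continuous_fderiv one_ne_zero
  have happ (v : ℂ) : fderiv ℝ (h ⋆[L, volume] ρ) x v = ∫ t, h t * fderiv ℝ ρ (x - t) v := by
    rw [hder.fderiv, convolution_precompR_apply L hloc (hcρ.fderiv ℝ) hcont]
    rfl
  have hint (v : ℂ) : Integrable fun t => h t * fderiv ℝ ρ (x - t) v :=
    (hcρ.fderiv_apply ℝ v).convolutionExists_right L hloc (hcont.clm_apply continuous_const) x
  have hzero : ∫ t, h t * dbar (fun s => ρ (x - s)) t = 0 :=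
    hdist _ (hρ.comp (contDiff_const.sub contDiff_id))
      (hcρ.comp_homeomorph (Homeomorph.subLeft x))
  have hsplit : (fun t => h t * dbar (fun s => ρ (x - s)) t) = fun t =>
      (-1 / 2 : ℂ) * (h t * fderiv ℝ ρ (x - t) 1 +
        Complex.I * (h t * fderiv ℝ ρ (x - t) Complex.I)) := by
    ext t
    rw [dbar_comp_const_sub (hρ1.differentiable one_ne_zero _), dbar]
    ring
  rw [hsplit, integral_const_mul, integral_add (hint 1) ((hint Complex.I).const_mul _),
    integral_const_mul, ← happ, ← happ] at hzero
  refine differentiableAt_complex_iff_differentiableAt_real.2 ⟨hder.differentiableAt, ?_⟩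
  rw [smul_eq_mul]
  linear_combination (2 * Complex.I) * hzero +
    fderiv ℝ (h ⋆[L, volume] ρ) x Complex.I * Complex.I_sq

/-- A locally integrable function on `ℂ` which vanishes at infinity and satisfies
`∂h/∂z̄ = 0` in the sense of distributions vanishes almost everywhere. -/
theorem stmt4 (h : ℂ → ℂ)
    (hloc : MeasureTheory.LocallyIntegrable h MeasureTheory.volume)
    (h0 : Filter.Tendsto h (Filter.cocompact ℂ) (nhds 0))
    (hdist : ∀ φ : ℂ → ℂ, ContDiff ℝ (⊤ : ℕ∞) φ → HasCompactSupport φ →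
      ∫ z, h z * dbar φ z = 0) :
    ∀ᵐ z ∂(MeasureTheory.volume : Measure ℂ), h z = 0 := by
  refine ae_eq_zero_of_integral_contDiff_smul_eq_zero hloc fun g hg hcg => ?_
  set ρ : ℂ → ℂ := fun z => (g (-z) : ℂ)
  have hρ : ContDiff ℝ (⊤ : ℕ∞) ρ := Complex.ofRealCLM.contDiff.comp (hg.comp contDiff_neg)
  have hcρ : HasCompactSupport ρ :=
    (hcg.comp_homeomorph (Homeomorph.neg ℂ)).comp_left (g := Complex.ofReal) Complex.ofReal_zero
  have hzero : (h ⋆[ContinuousLinearMap.mul ℝ ℂ, volume] ρ) 0 = 0 :=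
    (differentiable_convolution_of_integral_mul_dbar_eq_zero hloc hdist hρ hcρ
      ).apply_eq_of_tendsto_cocompact 0
      (tendsto_convolution_cocompact_zero h0 hρ.continuous hcρ)
  rw [← hzero, convolution_def]
  refine integral_congr_ae (Filter.Eventually.of_forall fun t => ?_)
  simp [ρ, mul_comm]
end

section
/- Let U₁ and U₂ be monic complex polynomials with deg U₂ = deg U₁ + 2. Then there exists at most one compactly supported positive Borel measure μ on ℂ with total mass 1 whose Cauchy transform satisfies C_μ(z)² = U₁(z)/U₂(z) for Lebesgue-almost every z ∈ ℂ. That is, if μ and ν are two such measures, then μ = ν. -/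
open MeasureTheory Polynomial

open Set Filter Topology Metric
open scoped ComplexConjugate ENNReal

namespace CauchyTransform

/-! ### The kernel `z⁻¹` -/

lemma lintegral_ball_inv (r : ℝ) (ξ : ℂ) :
    ∫⁻ z in ball ξ r, ‖(z - ξ)⁻¹‖ₑ = ENNReal.ofReal (2 * Real.pi * r) := by
  have h0 : ∫⁻ z in ball ξ r, ‖(z - ξ)⁻¹‖ₑ = ∫⁻ z : ℂ, (ball (0 : ℂ) r).indicator
      (fun z => ‖z⁻¹‖ₑ) z := by
    rw [← lintegral_indicator measurableSet_ball,
      ← lintegral_add_right_eq_self _ ξ]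
    congr 1 with z
    simp [indicator, dist_eq_norm]
  rw [h0, ← Complex.lintegral_comp_polarCoord_symm]
  have h1 : ∀ p ∈ polarCoord.target, ENNReal.ofReal p.1 • (ball (0 : ℂ) r).indicator
      (fun z => ‖z⁻¹‖ₑ) (Complex.polarCoord.symm p)
      = (Ioo 0 r ×ˢ Ioo (-Real.pi) Real.pi).indicator (fun _ => 1) p := by
    rintro ⟨x, t⟩ hp
    rw [polarCoord_target] at hp
    have hx : 0 < x := hp.1
    have hn : ‖Complex.polarCoord.symm (x, t)‖ = x := by
      rw [Complex.norm_polarCoord_symm]; exact abs_of_pos hx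
    by_cases hxr : x < r
    · rw [indicator_of_mem (by rwa [mem_ball_zero_iff, hn]),
        indicator_of_mem (show (x, t) ∈ Ioo 0 r ×ˢ Ioo (-Real.pi) Real.pi from ⟨⟨hx, hxr⟩, hp.2⟩),
        ← ofReal_norm, norm_inv, hn, smul_eq_mul, ← ENNReal.ofReal_mul hx.le,
        mul_inv_cancel₀ hx.ne', ENNReal.ofReal_one]
    · rw [indicator_of_notMem (by rwa [mem_ball_zero_iff, hn]), smul_zero,
        indicator_of_notMem (fun h => hxr h.1.2)]
  rw [setLIntegral_congr_fun polarCoord.open_target.measurableSet h1,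
    setLIntegral_indicator (measurableSet_Ioo.prod measurableSet_Ioo)]
  have h2 : (Ioo 0 r ×ˢ Ioo (-Real.pi) Real.pi) ∩ polarCoord.target
      = Ioo 0 r ×ˢ Ioo (-Real.pi) Real.pi := by
    rw [polarCoord_target]
    exact inter_eq_left.2 (prod_mono (fun x hx => hx.1) subset_rfl)
  rw [h2, setLIntegral_one, Measure.volume_eq_prod, Measure.prod_prod, Real.volume_Ioo,
    Real.volume_Ioo, mul_comm, ← ENNReal.ofReal_mul (by linarith [Real.pi_pos])]
  ring_nf

lemma lintegral_ball_inv_le (a : ℂ) {r : ℝ} (hr : 0 < r) (ξ : ℂ) :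
    ∫⁻ z in ball a r, ‖(z - ξ)⁻¹‖ₑ ≤ ENNReal.ofReal (3 * Real.pi * r) := by
  have h1 : ∫⁻ z in ball a r \ ball ξ r, ‖(z - ξ)⁻¹‖ₑ ≤ ENNReal.ofReal (Real.pi * r) := by
    calc ∫⁻ z in ball a r \ ball ξ r, ‖(z - ξ)⁻¹‖ₑ
        ≤ ∫⁻ z in ball a r \ ball ξ r, ENNReal.ofReal r⁻¹ := by
          refine setLIntegral_mono measurable_const fun z hz => ?_
          rw [← ofReal_norm, norm_inv]
          have : r ≤ ‖z - ξ‖ := by simpa [dist_eq_norm] using hz.2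
          gcongr
      _ ≤ ∫⁻ z in ball a r, ENNReal.ofReal r⁻¹ := lintegral_mono_set sdiff_subset
      _ = ENNReal.ofReal (Real.pi * r) := by
          rw [setLIntegral_const, Complex.volume_ball, ← ENNReal.ofReal_coe_nnreal,
            NNReal.coe_real_pi, ← ENNReal.ofReal_pow hr.le, ← ENNReal.ofReal_mul (by positivity),
            ← ENNReal.ofReal_mul (by positivity)]
          congr 1
          field_simp
  calc ∫⁻ z in ball a r, ‖(z - ξ)⁻¹‖ₑ
      ≤ ∫⁻ z in ball ξ r ∪ (ball a r \ ball ξ r), ‖(z - ξ)⁻¹‖ₑ :=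
        lintegral_mono_set (by simp)
    _ ≤ (∫⁻ z in ball ξ r, ‖(z - ξ)⁻¹‖ₑ) + ∫⁻ z in ball a r \ ball ξ r, ‖(z - ξ)⁻¹‖ₑ :=
        lintegral_union_le _ _ _
    _ ≤ ENNReal.ofReal (2 * Real.pi * r) + ENNReal.ofReal (Real.pi * r) := by
        rw [lintegral_ball_inv]; gcongr
    _ = ENNReal.ofReal (3 * Real.pi * r) := by
        rw [← ENNReal.ofReal_add (by positivity) (by positivity)]; ring_nf

lemma measurable_kernel : Measurable fun p : ℂ × ℂ => (p.1 - p.2)⁻¹ := by fun_prop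

lemma integrable_kernel_prod (μ : Measure ℂ) [IsFiniteMeasure μ] (a : ℂ) (r : ℝ) :
    Integrable (fun p : ℂ × ℂ => (p.1 - p.2)⁻¹) ((volume.restrict (ball a r)).prod μ) := by
  refine ⟨measurable_kernel.aestronglyMeasurable, ?_⟩
  rcases le_or_gt r 0 with hr | hr
  · simp [ball_eq_empty.2 hr, HasFiniteIntegral]
  rw [HasFiniteIntegral, lintegral_prod_symm _ (by fun_prop)]
  dsimp only
  calc ∫⁻ ξ, (∫⁻ z in ball a r, ‖(z - ξ)⁻¹‖ₑ) ∂μ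
      ≤ ∫⁻ ξ, ENNReal.ofReal (3 * Real.pi * r) ∂μ :=
        lintegral_mono fun ξ => lintegral_ball_inv_le a hr ξ
    _ < ∞ := by
        rw [lintegral_const]
        exact ENNReal.mul_lt_top ENNReal.ofReal_lt_top (measure_lt_top _ _)

/-! ### The Cauchy–Pompeiu formula, real part -/

lemma integral_fderiv_conj_inv_zero {ψ : ℂ → ℝ} (hψ : ContDiff ℝ 1 ψ) (hc : HasCompactSupport ψ) :
    ∫ z, fderiv ℝ ψ z (conj z)⁻¹ = -(2 * Real.pi) * ψ 0 := by
  set e : ℝ → ℂ := fun t => Real.cos t + Real.sin t * Complex.I with he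
  have hne : ∀ t, ‖e t‖ = 1 := fun t => by
    simp [he]
  have hec : Continuous e := by fun_prop
  have hdc : Continuous (fderiv ℝ ψ) := hψ.continuous_fderiv one_ne_zero
  rw [← Complex.integral_comp_polarCoord_symm]
  have h1 : ∀ p ∈ polarCoord.target, p.1 • fderiv ℝ ψ (Complex.polarCoord.symm p)
      (conj (Complex.polarCoord.symm p))⁻¹ = fderiv ℝ ψ (p.1 * e p.2) (e p.2) := by
    rintro ⟨x, t⟩ hp
    rw [polarCoord_target] at hp
    have hx : 0 < x := hp.1
    rw [Complex.polarCoord_symm_apply, ← map_smul]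
    congr 1
    have h2 : e t * conj (e t) = 1 := by
      rw [Complex.mul_conj, Complex.normSq_eq_norm_sq, hne]; simp
    have h3 : conj (e t) ≠ 0 := right_ne_zero_of_mul_eq_one h2
    change x • (conj ((x : ℂ) * e t))⁻¹ = e t
    have hx' : (x : ℂ) ≠ 0 := by exact_mod_cast hx.ne'
    rw [map_mul, Complex.conj_ofReal, Complex.real_smul]
    field_simp
    rw [mul_comm, h2]
  rw [setIntegral_congr_fun polarCoord.open_target.measurableSet h1, polarCoord_target]
  obtain ⟨R, hR⟩ := hc.isCompact.isBounded.subset_closedBall 0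
  have hzero : ∀ z : ℂ, R < ‖z‖ → fderiv ℝ ψ z = 0 := fun z hz => by
    have : z ∉ tsupport ψ := fun h => by
      have := hR h
      rw [mem_closedBall_zero_iff] at this
      exact this.not_gt hz
    exact image_eq_zero_of_notMem_tsupport fun h => this (tsupport_fderiv_subset ℝ h)
  have hint : IntegrableOn (fun p : ℝ × ℝ => fderiv ℝ ψ (p.1 * e p.2) (e p.2))
      (Ioi 0 ×ˢ Ioo (-Real.pi) Real.pi) (volume.prod volume) := by
    have hcont : Continuous (fun p : ℝ × ℝ => fderiv ℝ ψ (p.1 * e p.2) (e p.2)) := by fun_prop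
    have h4 : IntegrableOn (fun p : ℝ × ℝ => fderiv ℝ ψ (p.1 * e p.2) (e p.2))
      (Icc 0 R ×ˢ Icc (-Real.pi) Real.pi) (volume.prod volume) :=
      hcont.continuousOn.integrableOn_compact (isCompact_Icc.prod isCompact_Icc)
    refine h4.of_forall_sdiff_eq_zero (measurableSet_Ioi.prod measurableSet_Ioo) ?_
    rintro ⟨x, t⟩ ⟨⟨hx, ht⟩, hn⟩
    have hx : 0 < x := hx
    have : R < x := by
      by_contra! h
      exact hn ⟨⟨hx.le, h⟩, Ioo_subset_Icc_self ht⟩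
    change fderiv ℝ ψ (x * e t) (e t) = 0
    rw [hzero _ (by simpa [hne, abs_of_pos hx] using this)]
    rfl
  rw [Measure.volume_eq_prod, ← Measure.prod_restrict,
    integral_prod_symm _ (by rwa [Measure.prod_restrict])]
  have h5 : ∀ t, ∫ x in Ioi (0 : ℝ), fderiv ℝ ψ (x * e t) (e t) = - ψ 0 := fun t => by
    have hg : ContDiff ℝ 1 (fun x : ℝ => ψ (x * e t)) :=
      hψ.comp (Complex.ofRealCLM.contDiff.mul contDiff_const)
    have hgc : HasCompactSupport (fun x : ℝ => ψ (x * e t)) := by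
      refine HasCompactSupport.of_support_subset_isCompact (isCompact_Icc (a := -R) (b := R)) ?_
      intro x hx
      have := hR (subset_tsupport _ hx)
      simpa [hne, abs_le] using this
    have hd : ∀ x : ℝ, deriv (fun x : ℝ => ψ (x * e t)) x =
        fderiv ℝ ψ (x * e t) (e t) := fun x => by
      have h6 : HasDerivAt (fun x : ℝ => (x : ℂ) * e t) (e t) x := by
        simpa using (Complex.ofRealCLM.hasDerivAt (x := x)).mul_const (e t)
      exact ((hψ.differentiable one_ne_zero _).hasFDerivAt.comp_hasDerivAt x h6).deriv
    simp_rw [← hd]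
    simpa using hgc.integral_Ioi_deriv_eq hg 0
  simp_rw [h5]
  rw [setIntegral_const, Real.volume_real_Ioo_of_le (by linarith [Real.pi_pos]), smul_eq_mul]
  ring

/-- Real part of the Cauchy–Pompeiu formula for a compactly supported `C¹` function. -/
lemma integral_fderiv_conj_inv {ψ : ℂ → ℝ} (hψ : ContDiff ℝ 1 ψ) (hc : HasCompactSupport ψ)
    (ξ : ℂ) : ∫ z, fderiv ℝ ψ z (conj (z - ξ)⁻¹) = -(2 * Real.pi) * ψ ξ := by
  have h := integral_fderiv_conj_inv_zero (ψ := fun z => ψ (z + ξ)) (by fun_prop)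
    (hc.comp_homeomorph (Homeomorph.addRight ξ))
  rw [zero_add] at h
  rw [← h, ← integral_add_right_eq_self _ ξ]
  congr 1 with z
  rw [fderiv_comp_add_right, add_sub_cancel_right, map_inv₀]

/-! ### The Cauchy transform -/

/-- The Cauchy transform of a measure. -/
noncomputable def cauchy (μ : Measure ℂ) (z : ℂ) : ℂ := ∫ ξ, (z - ξ)⁻¹ ∂μ

/-- The potential of a measure for the kernel `|z|⁻¹`. -/
noncomputable def normPotential (μ : Measure ℂ) (z : ℂ) : ℝ := ∫ ξ, ‖(z - ξ)⁻¹‖ ∂μ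

lemma ae_of_forall_ae_ball {p : ℂ → Prop}
    (h : ∀ n : ℕ, ∀ᵐ z ∂(volume : Measure ℂ).restrict (ball 0 n), p z) :
    ∀ᵐ z ∂(volume : Measure ℂ), p z := by
  have h' : ∀ᵐ z ∂(volume : Measure ℂ), ∀ n : ℕ, z ∈ ball (0 : ℂ) n → p z :=
    ae_all_iff.2 fun n => (ae_restrict_iff' measurableSet_ball).1 (h n)
  filter_upwards [h'] with z hz
  obtain ⟨n, hn⟩ := exists_nat_gt ‖z‖
  exact hz n (by simpa using hn)

variable (μ : Measure ℂ) [IsFiniteMeasure μ]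

lemma ae_integrable_kernel : ∀ᵐ z ∂(volume : Measure ℂ), Integrable (fun ξ => (z - ξ)⁻¹) μ :=
  ae_of_forall_ae_ball fun n => (integrable_kernel_prod μ 0 n).prod_right_ae

lemma integrableOn_normPotential (a : ℂ) (r : ℝ) : IntegrableOn (normPotential μ) (ball a r) :=
  (integrable_kernel_prod μ a r).integral_norm_prod_left

lemma integrableOn_cauchy (a : ℂ) (r : ℝ) : IntegrableOn (cauchy μ) (ball a r) :=
  (integrable_kernel_prod μ a r).integral_prod_left

lemma aestronglyMeasurable_cauchy : AEStronglyMeasurable (cauchy μ) volume :=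
  (measurable_kernel.stronglyMeasurable.integral_prod_right (ν := μ)).aestronglyMeasurable

/-- In the sense of distributions, `-2πμ` is the divergence of the conjugate of the Cauchy
transform of `μ`. -/
lemma integral_fderiv_conj_cauchy {ψ : ℂ → ℝ} (hψ : ContDiff ℝ 1 ψ) (hc : HasCompactSupport ψ) :
    ∫ z, fderiv ℝ ψ z (conj (cauchy μ z)) = -(2 * Real.pi) * ∫ ξ, ψ ξ ∂μ := by
  obtain ⟨R, hR⟩ := hc.isCompact.isBounded.subset_ball 0
  have hdc : Continuous (fderiv ℝ ψ) := hψ.continuous_fderiv one_ne_zero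
  obtain ⟨B, hB⟩ := hdc.bounded_above_of_compact_support (hc.fderiv ℝ)
  have hzero : ∀ z ∉ ball (0 : ℂ) R, fderiv ℝ ψ z = 0 := fun z hz =>
    image_eq_zero_of_notMem_tsupport fun h => hz (hR (tsupport_fderiv_subset ℝ h))
  have hint : Integrable (fun p : ℂ × ℂ => fderiv ℝ ψ p.1 (conj (p.1 - p.2)⁻¹))
      ((volume.restrict (ball 0 R)).prod μ) := by
    refine ((integrable_kernel_prod μ 0 R).norm.const_mul B).mono' ?_ (.of_forall fun p => ?_)
    · have h1 : Measurable fun p : ℂ × ℂ => conj (p.1 - p.2)⁻¹ :=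
        Complex.continuous_conj.measurable.comp measurable_kernel
      have h2 : Measurable fun p : ℂ × ℂ => (fderiv ℝ ψ p.1, conj (p.1 - p.2)⁻¹) :=
        (hdc.measurable.comp measurable_fst).prodMk h1
      have h3 : Continuous fun q : (ℂ →L[ℝ] ℝ) × ℂ => q.1 q.2 := by fun_prop
      exact (h3.measurable.comp h2).aestronglyMeasurable
    · refine ((fderiv ℝ ψ p.1).le_opNorm _).trans ?_
      rw [RCLike.norm_conj]
      gcongr
      exact hB _
  calc ∫ z, fderiv ℝ ψ z (conj (cauchy μ z))
      = ∫ z in ball 0 R, fderiv ℝ ψ z (conj (cauchy μ z)) :=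
        (setIntegral_eq_integral_of_forall_compl_eq_zero fun z hz => by simp [hzero z hz]).symm
    _ = ∫ z in ball 0 R, (∫ ξ, fderiv ℝ ψ z (conj (z - ξ)⁻¹) ∂μ) := by
        refine integral_congr_ae (ae_restrict_of_ae ?_)
        filter_upwards [ae_integrable_kernel μ] with z hz
        have := (fderiv ℝ ψ z ∘L Complex.conjCLE.toContinuousLinearMap).integral_comp_comm hz
        simpa [cauchy] using this.symm
    _ = ∫ ξ, (∫ z in ball 0 R, fderiv ℝ ψ z (conj (z - ξ)⁻¹)) ∂μ := integral_integral_swap hint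
    _ = ∫ ξ, -(2 * Real.pi) * ψ ξ ∂μ := by
        congr 1 with ξ
        rw [← integral_fderiv_conj_inv hψ hc ξ]
        exact setIntegral_eq_integral_of_forall_compl_eq_zero fun z hz => by simp [hzero z hz]
    _ = _ := integral_const_mul _ _

lemma tendsto_average_inv {a ξ : ℂ} (h : ξ ≠ a) :
    Tendsto (fun ε : ℝ => ENNReal.ofReal ε⁻¹ * ∫⁻ z in ball a ε, ‖(z - ξ)⁻¹‖ₑ) (𝓝[>] 0) (𝓝 0) := by
  have hd : 0 < ‖ξ - a‖ := norm_pos_iff.2 (sub_ne_zero.2 h)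
  have hlim : Tendsto (fun ε : ℝ => ENNReal.ofReal (2 * Real.pi / ‖ξ - a‖ * ε)) (𝓝[>] 0) (𝓝 0) := by
    have h1 : Continuous fun ε : ℝ => ENNReal.ofReal (2 * Real.pi / ‖ξ - a‖ * ε) :=
      ENNReal.continuous_ofReal.comp (continuous_const.mul continuous_id)
    simpa using (h1.tendsto 0).mono_left nhdsWithin_le_nhds
  refine tendsto_of_tendsto_of_tendsto_of_le_of_le' tendsto_const_nhds hlim
    (.of_forall fun _ => zero_le) ?_
  filter_upwards [self_mem_nhdsWithin, Ioo_mem_nhdsGT (half_pos hd)] with ε hε hε'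
  have hε : 0 < ε := hε
  calc ENNReal.ofReal ε⁻¹ * ∫⁻ z in ball a ε, ‖(z - ξ)⁻¹‖ₑ
      ≤ ENNReal.ofReal ε⁻¹ * ∫⁻ z in ball a ε, ENNReal.ofReal (2 / ‖ξ - a‖) := by
        refine mul_le_mul' le_rfl ?_
        refine setLIntegral_mono measurable_const fun z hz => ?_
        rw [← ofReal_norm, norm_inv]
        refine ENNReal.ofReal_le_ofReal ?_
        rw [inv_le_comm₀ ?_ (by positivity), inv_div]
        all_goals
          have h3 : ‖z - a‖ < ε := by simpa [dist_eq_norm] using hz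
          have h4 : ‖ξ - a‖ ≤ ‖z - ξ‖ + ‖z - a‖ := by
            rw [norm_sub_rev z ξ]
            exact norm_sub_le_norm_sub_add_norm_sub _ _ _
          linarith [hε'.2]
    _ = ENNReal.ofReal (2 * Real.pi / ‖ξ - a‖ * ε) := by
        rw [setLIntegral_const, Complex.volume_ball, ← ENNReal.ofReal_coe_nnreal,
            NNReal.coe_real_pi, ← ENNReal.ofReal_pow hε.le, ← ENNReal.ofReal_mul (by positivity),
            ← ENNReal.ofReal_mul (by positivity), ← ENNReal.ofReal_mul (by positivity)]
        congr 1
        field_simp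

/-- Near any point `a`, the function `(z - a) C_μ(z)` is close in mean to `μ {a}`. -/
lemma tendsto_average_cauchy (a : ℂ) :
    Tendsto (fun ε : ℝ => (ε ^ 2)⁻¹ * ∫ z in ball a ε, ‖(z - a) * cauchy μ z - μ.real {a}‖)
      (𝓝[>] 0) (𝓝 0) := by
  have hmeas : ∀ ε, Measurable fun ξ => ENNReal.ofReal ε⁻¹ * ∫⁻ z in ball a ε, ‖(z - ξ)⁻¹‖ₑ :=
    fun ε => (Measurable.lintegral_prod_left' (f := fun p : ℂ × ℂ => ‖(p.1 - p.2)⁻¹‖ₑ)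
      (by fun_prop)).const_mul _
  have hlim : Tendsto (fun ε : ℝ => ∫⁻ ξ in {a}ᶜ,
      ENNReal.ofReal ε⁻¹ * (∫⁻ z in ball a ε, ‖(z - ξ)⁻¹‖ₑ) ∂μ) (𝓝[>] 0) (𝓝 0) := by
    rw [← lintegral_zero (μ := μ.restrict {a}ᶜ)]
    refine tendsto_lintegral_filter_of_dominated_convergence
      (fun _ => ENNReal.ofReal (3 * Real.pi)) (.of_forall hmeas) ?_ ?_ ?_
    · filter_upwards [self_mem_nhdsWithin] with ε hε
      have hε : 0 < ε := hε
      refine .of_forall fun ξ => ?_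
      grw [lintegral_ball_inv_le a hε ξ, ← ENNReal.ofReal_mul (by positivity)]
      refine ENNReal.ofReal_le_ofReal (le_of_eq ?_)
      field_simp
    · rw [lintegral_const]
      exact (ENNReal.mul_lt_top ENNReal.ofReal_lt_top (measure_lt_top _ _)).ne
    · filter_upwards [ae_restrict_mem (measurableSet_singleton a).compl] with ξ hξ
      exact tendsto_average_inv hξ
  have hlim' := (ENNReal.tendsto_toReal ENNReal.zero_ne_top).comp hlim
  refine tendsto_of_tendsto_of_tendsto_of_le_of_le' tendsto_const_nhds hlim'
    (.of_forall fun ε => by positivity) ?_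
  have hfin : ∀ᶠ ε : ℝ in 𝓝[>] 0, ∫⁻ ξ in {a}ᶜ,
      ENNReal.ofReal ε⁻¹ * (∫⁻ z in ball a ε, ‖(z - ξ)⁻¹‖ₑ) ∂μ < 1 :=
    hlim.eventually (gt_mem_nhds one_pos)
  filter_upwards [hfin, self_mem_nhdsWithin] with ε hfin hε
  have hε : 0 < ε := hε
  rw [Function.comp_apply, ← ENNReal.toReal_ofReal (by positivity : 0 ≤ (ε ^ 2)⁻¹),
    integral_norm_eq_lintegral_enorm, ← ENNReal.toReal_mul]
  swap
  · exact ((((by fun_prop : AEStronglyMeasurable (fun z : ℂ => z - a) volume).mul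
      (aestronglyMeasurable_cauchy μ)).sub aestronglyMeasurable_const).restrict)
  refine ENNReal.toReal_mono (hfin.trans_le le_top).ne ?_
  have hpt : ∀ᵐ z ∂(volume : Measure ℂ).restrict (ball a ε),
      ‖(z - a) * cauchy μ z - μ.real {a}‖ₑ ≤
        ENNReal.ofReal ε * ∫⁻ ξ in {a}ᶜ, ‖(z - ξ)⁻¹‖ₑ ∂μ := by
    filter_upwards [ae_restrict_mem measurableSet_ball,
      ae_restrict_of_ae (ae_integrable_kernel μ),
      ae_restrict_of_ae (compl_mem_ae_iff.2 (measure_singleton a))] with z hz hint hza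
    have hza : z - a ≠ 0 := sub_ne_zero.2 hza
    have hrw : (z - a) * cauchy μ z - μ.real {a} = (z - a) * ∫ ξ in {a}ᶜ, (z - ξ)⁻¹ ∂μ := by
      rw [cauchy, ← integral_add_compl (measurableSet_singleton a) hint, mul_add,
        integral_singleton, Complex.real_smul]
      field_simp
      ring
    rw [hrw, enorm_mul]
    gcongr
    · rw [← ofReal_norm]
      refine ENNReal.ofReal_le_ofReal ?_
      exact (mem_ball_iff_norm.1 hz).le
    · exact enorm_integral_le_lintegral_enorm _
  calc ENNReal.ofReal (ε ^ 2)⁻¹ * ∫⁻ z in ball a ε, ‖(z - a) * cauchy μ z - μ.real {a}‖ₑ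
      ≤ ENNReal.ofReal (ε ^ 2)⁻¹ * ∫⁻ z in ball a ε,
          (ENNReal.ofReal ε * ∫⁻ ξ in {a}ᶜ, ‖(z - ξ)⁻¹‖ₑ ∂μ) := by
        refine mul_le_mul' le_rfl ?_
        exact lintegral_mono_ae hpt
    _ = ENNReal.ofReal ε⁻¹ * ∫⁻ z in ball a ε, (∫⁻ ξ in {a}ᶜ, ‖(z - ξ)⁻¹‖ₑ ∂μ) := by
        rw [lintegral_const_mul' _ _ ENNReal.ofReal_ne_top, ← mul_assoc,
          ← ENNReal.ofReal_mul (by positivity)]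
        congr 2
        field_simp
    _ = ENNReal.ofReal ε⁻¹ * ∫⁻ ξ in {a}ᶜ, (∫⁻ z in ball a ε, ‖(z - ξ)⁻¹‖ₑ) ∂μ := by
        rw [lintegral_lintegral_swap (by fun_prop)]
    _ = _ := (lintegral_const_mul' _ _ ENNReal.ofReal_ne_top).symm

/-! ### Cut-off functions -/

/-- A smooth radial function equal to `1` near `a` and to `0` outside `ball a ε`. -/
noncomputable def bump (a : ℂ) (ε : ℝ) (z : ℂ) : ℝ :=
  Real.smoothTransition (2 - 2 / ε ^ 2 * ‖z - a‖ ^ 2)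

lemma contDiff_bump (a : ℂ) (ε : ℝ) : ContDiff ℝ 1 (bump a ε) :=
  (Real.smoothTransition.contDiff (n := 1)).comp
    (contDiff_const.sub (contDiff_const.mul ((contDiff_id.sub contDiff_const).norm_sq ℝ)))

lemma bump_nonneg (a : ℂ) (ε : ℝ) (z : ℂ) : 0 ≤ bump a ε z := Real.smoothTransition.nonneg _

lemma bump_le_one (a : ℂ) (ε : ℝ) (z : ℂ) : bump a ε z ≤ 1 := Real.smoothTransition.le_one _

lemma bump_eq_zero {a : ℂ} {ε : ℝ} (hε : 0 < ε) {z : ℂ} (hz : ε ≤ ‖z - a‖) : bump a ε z = 0 := by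
  refine Real.smoothTransition.zero_of_nonpos ?_
  have h1 : ε ^ 2 ≤ ‖z - a‖ ^ 2 := by gcongr
  rw [sub_nonpos, div_mul_eq_mul_div, le_div_iff₀ (by positivity)]
  linarith

lemma bump_eq_one {a : ℂ} {ε : ℝ} (hε : 0 < ε) {z : ℂ} (hz : ‖z - a‖ ≤ ε / 2) :
    bump a ε z = 1 := by
  refine Real.smoothTransition.one_of_one_le ?_
  have h1 : ‖z - a‖ ^ 2 ≤ (ε / 2) ^ 2 := by gcongr
  rw [le_sub_comm, div_mul_eq_mul_div, div_le_iff₀ (by positivity)]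
  nlinarith

lemma hasCompactSupport_bump (a : ℂ) {ε : ℝ} (hε : 0 < ε) : HasCompactSupport (bump a ε) :=
  HasCompactSupport.of_support_subset_isCompact (isCompact_closedBall a ε) fun z hz => by
    by_contra h
    exact hz (bump_eq_zero hε (by
      rw [mem_closedBall_iff_norm, not_le] at h
      exact h.le))

lemma fderiv_bump (a : ℂ) (ε : ℝ) (z v : ℂ) : fderiv ℝ (bump a ε) z v =
    -(4 / ε ^ 2 * deriv Real.smoothTransition (2 - 2 / ε ^ 2 * ‖z - a‖ ^ 2) *
      inner ℝ (z - a) v) := by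
  have h1 : HasFDerivAt (fun z : ℂ => 2 - 2 / ε ^ 2 * ‖z - a‖ ^ 2) _ z :=
    (((hasFDerivAt_id z).sub_const a).norm_sq.const_mul (2 / ε ^ 2)).const_sub 2
  have h2 : HasDerivAt Real.smoothTransition _ (2 - 2 / ε ^ 2 * ‖z - a‖ ^ 2) :=
    ((Real.smoothTransition.contDiff (n := 1)).differentiable one_ne_zero _).hasDerivAt
  rw [show bump a ε = Real.smoothTransition ∘ _ from rfl, (h2.comp_hasFDerivAt z h1).fderiv]
  simp
  ring

lemma deriv_smoothTransition_nonneg (x : ℝ) : 0 ≤ deriv Real.smoothTransition x :=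
  Real.smoothTransition.monotone.deriv_nonneg

lemma deriv_smoothTransition_of_nonpos {x : ℝ} (hx : x ≤ 0) :
    deriv Real.smoothTransition x = 0 :=
  IsLocalMin.deriv_eq_zero (.of_forall fun y => by
    rw [Real.smoothTransition.zero_of_nonpos hx]; exact Real.smoothTransition.nonneg y)

lemma deriv_smoothTransition_of_one_le {x : ℝ} (hx : 1 ≤ x) :
    deriv Real.smoothTransition x = 0 :=
  IsLocalMax.deriv_eq_zero (.of_forall fun y => by
    rw [Real.smoothTransition.one_of_one_le hx]; exact Real.smoothTransition.le_one y)

lemma exists_deriv_smoothTransition_le : ∃ B, 0 < B ∧ ∀ x, deriv Real.smoothTransition x ≤ B := by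
  have hc : Continuous (deriv Real.smoothTransition) :=
    (Real.smoothTransition.contDiff (n := 1)).continuous_deriv le_rfl
  obtain ⟨B, hB⟩ := hc.bounded_above_of_compact_support
    (HasCompactSupport.of_support_subset_isCompact (isCompact_Icc (a := (0 : ℝ)) (b := 1))
      fun x hx => by
        by_contra h
        rcases not_and_or.1 h with h | h
        · exact hx (deriv_smoothTransition_of_nonpos (not_le.1 h).le)
        · exact hx (deriv_smoothTransition_of_one_le (not_le.1 h).le))
  exact ⟨max B 1, by positivity, fun x =>
    (le_abs_self _).trans ((hB x).trans (le_max_left _ _))⟩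

/-- A finite measure on `ℂ` is determined by its integrals of test functions. -/
lemma ext_of_integral_contDiff {μ ν : Measure ℂ} [IsFiniteMeasure μ] [IsFiniteMeasure ν]
    (h : ∀ ψ : ℂ → ℝ, ContDiff ℝ 1 ψ → HasCompactSupport ψ → ∫ z, ψ z ∂μ = ∫ z, ψ z ∂ν) :
    μ = ν := by
  have hopen : ∀ s : Set ℂ, IsOpen s → μ s = ν s := fun s hs => by
    obtain ⟨f, hfs, hf, hf01⟩ := hs.exists_contDiff_support_eq (n := 1)
    set ψ : ℕ → ℂ → ℝ := fun n z => Real.smoothTransition (n * f z) * bump 0 (n + 1) z with hψ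
    have hψc : ∀ n, ContDiff ℝ 1 (ψ n) := fun n =>
      ((Real.smoothTransition.contDiff (n := 1)).comp (contDiff_const.mul hf)).mul
        (contDiff_bump _ _)
    have hlim : ∀ ρ : Measure ℂ, IsFiniteMeasure ρ →
        Tendsto (fun n => ∫ z, ψ n z ∂ρ) atTop (𝓝 (ρ.real s)) := fun ρ _ => by
      rw [← integral_indicator_one hs.measurableSet]
      refine tendsto_integral_of_dominated_convergence (fun _ => 1)
        (fun n => (hψc n).continuous.aestronglyMeasurable) (integrable_const 1)
        (fun n => .of_forall fun z => ?_) (.of_forall fun z => ?_)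
      · rw [Real.norm_eq_abs, abs_of_nonneg
          (mul_nonneg (Real.smoothTransition.nonneg _) (bump_nonneg _ _ _))]
        exact mul_le_one₀ (Real.smoothTransition.le_one _) (bump_nonneg _ _ _) (bump_le_one _ _ _)
      · refine tendsto_const_nhds.congr' ?_
        by_cases hz : z ∈ s
        · have hfz : 0 < f z := lt_of_le_of_ne (hf01 (mem_range_self z)).1
            (Ne.symm (by rw [← hfs] at hz; exact hz))
          filter_upwards [eventually_ge_atTop ⌈(f z)⁻¹⌉₊,
            eventually_ge_atTop ⌈2 * ‖z‖⌉₊] with n h1 h2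
          have h1 : (f z)⁻¹ ≤ n := Nat.ceil_le.1 h1
          have h2 : 2 * ‖z‖ ≤ n := Nat.ceil_le.1 h2
          rw [indicator_of_mem hz, hψ]
          dsimp only
          rw [Real.smoothTransition.one_of_one_le, bump_eq_one (by positivity), Pi.one_apply,
            one_mul]
          · rw [sub_zero]; linarith
          · rwa [← div_le_iff₀ hfz, one_div]
        · have hfz : f z = 0 := by rw [← hfs] at hz; simpa using hz
          exact .of_forall fun n => by simp [hψ, hz, hfz]
    have := tendsto_nhds_unique (hlim μ inferInstance)
      ((hlim ν inferInstance).congr fun n =>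
        (h _ (hψc n) ((hasCompactSupport_bump 0 (by positivity)).mul_left)).symm)
    exact (measureReal_eq_measureReal_iff).1 this
  exact ext_of_generate_finite _ (BorelSpace.measurable_eq (α := ℂ))
    (fun s hs t ht _ => IsOpen.inter (s := s) (t := t) hs ht) hopen (hopen _ isOpen_univ)

/-! ### Logarithmic potentials -/

/-- The logarithmic potential of a measure. -/
noncomputable def potential (μ : Measure ℂ) (z : ℂ) : ℝ := ∫ ξ, Real.log ‖z - ξ‖ ∂μ

/-- A smooth regularization of the logarithmic potential. -/
noncomputable def regPotential (μ : Measure ℂ) (δ : ℝ) (z : ℂ) : ℝ :=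
  ∫ ξ, Real.log (‖z - ξ‖ ^ 2 + δ ^ 2) / 2 ∂μ

/-- The gradient of `regPotential`. -/
noncomputable def regGradient (μ : Measure ℂ) (δ : ℝ) (z : ℂ) : ℂ :=
  ∫ ξ, (‖z - ξ‖ ^ 2 + δ ^ 2)⁻¹ • (z - ξ) ∂μ

lemma norm_regKernel_le_inv (w : ℂ) (δ : ℝ) : ‖(‖w‖ ^ 2 + δ ^ 2)⁻¹ • w‖ ≤ ‖w⁻¹‖ := by
  rcases eq_or_ne w 0 with rfl | hw
  · simp
  have hw : 0 < ‖w‖ := norm_pos_iff.2 hw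
  rw [norm_smul, norm_inv, norm_inv, Real.norm_of_nonneg (by positivity), inv_mul_le_iff₀
    (by positivity), le_mul_inv_iff₀ hw]
  nlinarith [sq_nonneg δ]

lemma norm_regKernel_le (w : ℂ) {δ : ℝ} (hδ : 0 < δ) : ‖(‖w‖ ^ 2 + δ ^ 2)⁻¹ • w‖ ≤ δ⁻¹ := by
  rw [norm_smul, norm_inv, Real.norm_of_nonneg (by positivity), inv_mul_le_iff₀
    (by positivity), le_mul_inv_iff₀ hδ]
  nlinarith [sq_nonneg (‖w‖ - δ), norm_nonneg w]

lemma continuous_regKernel {δ : ℝ} (hδ : 0 < δ) :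
    Continuous fun p : ℂ × ℂ => (‖p.1 - p.2‖ ^ 2 + δ ^ 2)⁻¹ • (p.1 - p.2) := by
  have h1 : Continuous fun p : ℂ × ℂ => ‖p.1 - p.2‖ ^ 2 + δ ^ 2 := by fun_prop
  exact (h1.inv₀ fun p => by positivity).smul (continuous_fst.sub continuous_snd)

lemma continuous_innerSL_regKernel {δ : ℝ} (hδ : 0 < δ) :
    Continuous fun p : ℂ × ℂ => innerSL ℝ ((‖p.1 - p.2‖ ^ 2 + δ ^ 2)⁻¹ • (p.1 - p.2)) :=
  (innerSL ℝ (E := ℂ)).continuous.comp (continuous_regKernel hδ)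

lemma measurable_regKernel (δ : ℝ) (z : ℂ) :
    Measurable fun ξ : ℂ => (‖z - ξ‖ ^ 2 + δ ^ 2)⁻¹ • (z - ξ) := by fun_prop

lemma tendsto_regKernel (w : ℂ) :
    Tendsto (fun δ : ℝ => (‖w‖ ^ 2 + δ ^ 2)⁻¹ • w) (𝓝[>] 0) (𝓝 (conj w⁻¹)) := by
  rcases eq_or_ne w 0 with rfl | hw
  · simp
  have hw' : ‖w‖ ^ 2 + 0 ^ 2 ≠ 0 := by simpa using hw
  have h0 : ContinuousAt (fun δ : ℝ => ‖w‖ ^ 2 + δ ^ 2) 0 := by fun_prop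
  have h1 : ContinuousAt (fun δ : ℝ => (‖w‖ ^ 2 + δ ^ 2)⁻¹ • w) 0 :=
    (h0.inv₀ hw').smul continuousAt_const
  convert h1.tendsto.mono_left nhdsWithin_le_nhds using 2
  rw [Complex.inv_def, map_mul, Complex.conj_conj, Complex.conj_ofReal, Complex.real_smul,
    Complex.normSq_eq_norm_sq, mul_comm]
  simp

section

variable {μ : Measure ℂ}

lemma norm_regGradient_le {z : ℂ} (hz : Integrable (fun ξ => (z - ξ)⁻¹) μ) (δ : ℝ) :
    ‖regGradient μ δ z‖ ≤ normPotential μ z :=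
  norm_integral_le_of_norm_le hz.norm (.of_forall fun _ => norm_regKernel_le_inv _ δ)

lemma tendsto_regGradient {z : ℂ} (hz : Integrable (fun ξ => (z - ξ)⁻¹) μ) :
    Tendsto (fun δ => regGradient μ δ z) (𝓝[>] 0) (𝓝 (conj (cauchy μ z))) := by
  rw [cauchy, ← integral_conj]
  exact tendsto_integral_filter_of_dominated_convergence _
    (.of_forall fun δ => (measurable_regKernel δ z).aestronglyMeasurable)
    (.of_forall fun δ => .of_forall fun ξ => norm_regKernel_le_inv _ δ) hz.norm
    (.of_forall fun ξ => tendsto_regKernel _)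

variable [IsFiniteMeasure μ]

lemma integrable_of_continuous (hK : ∃ K : Set ℂ, IsCompact K ∧ μ Kᶜ = 0) {f : ℂ → ℝ}
    (hf : Continuous f) : Integrable f μ := by
  obtain ⟨K, hK, h0⟩ := hK
  have h := hf.continuousOn.integrableOn_compact (μ := μ) hK
  rwa [IntegrableOn, Measure.restrict_eq_self_of_ae_mem (mem_ae_iff.2 h0)] at h

lemma hasFDerivAt_regPotential (hK : ∃ K : Set ℂ, IsCompact K ∧ μ Kᶜ = 0) {δ : ℝ} (hδ : 0 < δ)
    (z : ℂ) : HasFDerivAt (regPotential μ δ)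
      (∫ ξ, innerSL ℝ ((‖z - ξ‖ ^ 2 + δ ^ 2)⁻¹ • (z - ξ)) ∂μ) z := by
  have hpos : ∀ x ξ : ℂ, ‖x - ξ‖ ^ 2 + δ ^ 2 ≠ 0 := fun x ξ => by positivity
  have hcont : ∀ x : ℂ, Continuous fun ξ => Real.log (‖x - ξ‖ ^ 2 + δ ^ 2) / 2 := fun x =>
    (Continuous.log (by fun_prop) (hpos x)).div_const 2
  refine hasFDerivAt_integral_of_dominated_of_fderiv_le (𝕜 := ℝ)
    (F := fun x ξ => Real.log (‖x - ξ‖ ^ 2 + δ ^ 2) / 2)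
    (F' := fun x ξ => innerSL ℝ ((‖x - ξ‖ ^ 2 + δ ^ 2)⁻¹ • (x - ξ)))
    (s := univ) (bound := fun _ => δ⁻¹)
    univ_mem (.of_forall fun x => (hcont x).aestronglyMeasurable)
    (integrable_of_continuous hK (hcont z)) ?_ ?_ (integrable_const _) ?_
  · exact ((continuous_innerSL_regKernel hδ).comp
      (Continuous.prodMk_right z)).aestronglyMeasurable
  · refine .of_forall fun ξ x _ => ?_
    rw [innerSL_apply_norm]
    exact norm_regKernel_le _ hδ
  · refine .of_forall fun ξ x _ => ?_
    have h1 := ((((hasFDerivAt_id x).sub_const ξ).norm_sq.add_const (δ ^ 2)).log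
      (hpos x ξ)).mul_const 2⁻¹
    simp_rw [div_eq_mul_inv]
    refine h1.congr_fderiv ?_
    ext v
    simp only [id_eq, smul_apply, ContinuousLinearMap.comp_apply,
      ContinuousLinearMap.id_apply, innerSL_apply_apply, real_inner_smul_left, smul_eq_mul,
      nsmul_eq_mul]
    ring

lemma fderiv_regPotential (hK : ∃ K : Set ℂ, IsCompact K ∧ μ Kᶜ = 0) {δ : ℝ} (hδ : 0 < δ)
    (z v : ℂ) : fderiv ℝ (regPotential μ δ) z v = inner ℝ (regGradient μ δ z) v := by
  have hint : Integrable (fun ξ => (‖z - ξ‖ ^ 2 + δ ^ 2)⁻¹ • (z - ξ)) μ :=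
    (integrable_const δ⁻¹).mono' (measurable_regKernel δ z).aestronglyMeasurable
      (.of_forall fun ξ => norm_regKernel_le _ hδ)
  have hint' : Integrable (fun ξ => innerSL ℝ ((‖z - ξ‖ ^ 2 + δ ^ 2)⁻¹ • (z - ξ))) μ :=
    (integrable_const δ⁻¹).mono'
      ((continuous_innerSL_regKernel hδ).comp (Continuous.prodMk_right z)).aestronglyMeasurable
      (.of_forall fun ξ => by rw [innerSL_apply_norm]; exact norm_regKernel_le _ hδ)
  rw [(hasFDerivAt_regPotential hK hδ z).fderiv, ContinuousLinearMap.integral_apply hint',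
    regGradient, real_inner_comm, ← integral_inner hint]
  simp_rw [innerSL_apply_apply, real_inner_comm]

lemma continuous_integral_innerSL_regKernel {δ : ℝ} (hδ : 0 < δ) :
    Continuous fun z => ∫ ξ, innerSL ℝ ((‖z - ξ‖ ^ 2 + δ ^ 2)⁻¹ • (z - ξ)) ∂μ := by
  have hc := continuous_innerSL_regKernel hδ
  have hc' : ∀ ξ : ℂ, Continuous fun z : ℂ => innerSL ℝ ((‖z - ξ‖ ^ 2 + δ ^ 2)⁻¹ • (z - ξ)) := by
    intro ξ
    have h0 : ∀ z, ‖z - ξ‖ ^ 2 + δ ^ 2 ≠ 0 := fun z => by positivity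
    have h1 : Continuous fun z => (‖z - ξ‖ ^ 2 + δ ^ 2)⁻¹ • (z - ξ) := by
      fun_prop (disch := assumption)
    fun_prop
  refine continuous_of_dominated (bound := fun _ => δ⁻¹)
    (fun z => (hc.comp (Continuous.prodMk_right z)).aestronglyMeasurable)
    (fun z => .of_forall fun ξ => ?_) (integrable_const _)
    (.of_forall hc')
  rw [innerSL_apply_norm]
  exact norm_regKernel_le _ hδ

lemma contDiff_regPotential (hK : ∃ K : Set ℂ, IsCompact K ∧ μ Kᶜ = 0) {δ : ℝ} (hδ : 0 < δ) :
    ContDiff ℝ 1 (regPotential μ δ) := by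
  have hd : ∀ z, HasFDerivAt (regPotential μ δ) _ z := hasFDerivAt_regPotential hK hδ
  have he : fderiv ℝ (regPotential μ δ) = _ := funext fun z => (hd z).fderiv
  refine contDiff_one_iff_fderiv.2 ⟨fun z => (hd z).differentiableAt, ?_⟩
  rw [he]
  exact continuous_integral_innerSL_regKernel hδ

lemma tendsto_regPotential (hK : ∃ K : Set ℂ, IsCompact K ∧ μ Kᶜ = 0) {z : ℂ}
    (hz : Integrable (fun ξ => (z - ξ)⁻¹) μ) (h0 : μ {z} = 0) :
    Tendsto (fun δ => regPotential μ δ z) (𝓝[>] 0) (𝓝 (potential μ z)) := by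
  have hne : ∀ᵐ ξ ∂μ, ξ ≠ z := compl_mem_ae_iff.2 h0
  refine tendsto_integral_filter_of_dominated_convergence
    (fun ξ => ‖z - ξ‖ ^ 2 + ‖(z - ξ)⁻¹‖) ?_ ?_
    ((integrable_of_continuous hK (by fun_prop)).add hz.norm) ?_
  · exact .of_forall fun δ => Measurable.aestronglyMeasurable (by fun_prop)
  · filter_upwards [Ioo_mem_nhdsGT (zero_lt_one' ℝ)] with δ hδ
    filter_upwards [hne] with ξ hξ
    have hr : 0 < ‖z - ξ‖ := norm_pos_iff.2 (sub_ne_zero.2 hξ.symm)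
    have hδ2 : δ ^ 2 ≤ 1 := by nlinarith [hδ.1, hδ.2]
    have h1 : Real.log (‖z - ξ‖ ^ 2 + δ ^ 2) ≤ ‖z - ξ‖ ^ 2 + δ ^ 2 - 1 :=
      Real.log_le_sub_one_of_pos (by positivity)
    have h2 : Real.log (‖z - ξ‖ ^ 2) ≤ Real.log (‖z - ξ‖ ^ 2 + δ ^ 2) :=
      Real.log_le_log (by positivity) (by nlinarith [sq_nonneg δ])
    have h3 : Real.log ‖z - ξ‖⁻¹ ≤ ‖z - ξ‖⁻¹ - 1 := Real.log_le_sub_one_of_pos (by positivity)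
    rw [Real.log_pow] at h2
    rw [Real.log_inv] at h3
    have h4 : 0 < ‖z - ξ‖⁻¹ := by positivity
    push_cast at h2
    rw [Real.norm_eq_abs, abs_le, norm_inv]
    constructor <;> nlinarith
  · filter_upwards [hne] with ξ hξ
    have hr : ‖z - ξ‖ ^ 2 + 0 ^ 2 ≠ 0 := by simpa using sub_ne_zero.2 hξ.symm
    have h0 : ContinuousAt (fun δ : ℝ => ‖z - ξ‖ ^ 2 + δ ^ 2) 0 := by fun_prop
    have h1 : ContinuousAt (fun δ : ℝ => Real.log (‖z - ξ‖ ^ 2 + δ ^ 2) / 2) 0 :=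
      (h0.log hr).div_const 2
    convert h1.tendsto.mono_left nhdsWithin_le_nhds using 2
    simp [Real.log_pow]

lemma measurable_potential : Measurable (potential μ) :=
  ((by fun_prop : Measurable fun p : ℂ × ℂ => Real.log ‖p.1 - p.2‖).stronglyMeasurable.integral_prod_right
    (ν := μ)).measurable

lemma ae_measure_singleton_eq_zero : ∀ᵐ z ∂(volume : Measure ℂ), μ {z} = 0 := by
  have h : Set.Countable {z : ℂ | 0 < μ {z}} :=
    Measure.countable_meas_pos_of_disjoint_iUnion (fun z => measurableSet_singleton z)
      fun z w hzw => disjoint_singleton.2 hzw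
  filter_upwards [h.ae_notMem volume] with z hz
  simpa using hz

end

/-! ### The energy estimate -/

lemma measurable_conj_cauchy (μ : Measure ℂ) [IsFiniteMeasure μ] :
    Measurable fun z => conj (cauchy μ z) :=
  Complex.continuous_conj.measurable.comp
    (measurable_kernel.stronglyMeasurable.integral_prod_right (ν := μ)).measurable

lemma measurable_clm_apply {L : ℂ → ℂ →L[ℝ] ℝ} (hL : Continuous L) {v : ℂ → ℂ}
    (hv : Measurable v) : Measurable fun z => L z (v z) := by
  have h : Continuous fun q : (ℂ →L[ℝ] ℝ) × ℂ => q.1 q.2 := by fun_prop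
  exact h.measurable.comp (hL.measurable.prodMk hv)

section

variable {μ ν ρ : Measure ℂ} [IsFiniteMeasure μ] [IsFiniteMeasure ν] [IsProbabilityMeasure ρ]

/-- Testing `ρ` against `χ Φ(u)`, where `u` is the difference of the logarithmic potentials of
`μ` and `ν`. -/
lemma integral_test_potential_le (hμK : ∃ K : Set ℂ, IsCompact K ∧ μ Kᶜ = 0)
    (hνK : ∃ K : Set ℂ, IsCompact K ∧ ν Kᶜ = 0) {χ : ℂ → ℝ} (hχ : ContDiff ℝ 1 χ)
    (hc : HasCompactSupport χ) (hχ0 : ∀ z, 0 ≤ χ z) (hχ1 : ∀ z, χ z ≤ 1) {B : ℝ}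
    (hB : ∀ᵐ z, z ∈ tsupport χ → ‖cauchy ρ z‖ ≤ B) {Φ : ℝ → ℝ} (hΦ : ContDiff ℝ 1 Φ) {A c : ℝ}
    (hA : ∀ t, |Φ t| ≤ A) (hA' : ∀ t, |deriv Φ t| ≤ A) (hc0 : 0 ≤ c) (hΦc : ∀ t, -c ≤ Φ t) :
    Integrable (fun z => Φ (potential μ z - potential ν z) * fderiv ℝ χ z (conj (cauchy ρ z))) ∧
    Integrable (fun z => χ z * (deriv Φ (potential μ z - potential ν z) *
      inner ℝ (conj (cauchy μ z) - conj (cauchy ν z)) (conj (cauchy ρ z)))) ∧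
    (∫ z, Φ (potential μ z - potential ν z) * fderiv ℝ χ z (conj (cauchy ρ z))) +
      (∫ z, χ z * (deriv Φ (potential μ z - potential ν z) *
        inner ℝ (conj (cauchy μ z) - conj (cauchy ν z)) (conj (cauchy ρ z)))) ≤
      2 * Real.pi * c := by
  have hA0 : 0 ≤ A := (abs_nonneg _).trans (hA 0)
  have hdχ : Continuous (fderiv ℝ χ) := hχ.continuous_fderiv one_ne_zero
  have hdΦ : Continuous (deriv Φ) := hΦ.continuous_deriv le_rfl
  obtain ⟨D, hD⟩ := hdχ.bounded_above_of_compact_support (hc.fderiv ℝ)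
  have hD0 : 0 ≤ D := (norm_nonneg _).trans (hD 0)
  obtain ⟨R, hR⟩ := hc.isCompact.isBounded.subset_ball 0
  set V : ℂ → ℂ := fun z => conj (cauchy ρ z) with hV
  have hVm : Measurable V := measurable_conj_cauchy ρ
  set g : ℂ → ℝ := (tsupport χ).indicator fun z =>
    A * (D * B) + A * (normPotential μ z + normPotential ν z) * B with hg
  have hgi : Integrable g := by
    rw [hg, integrable_indicator_iff (isClosed_tsupport χ).measurableSet]
    refine IntegrableOn.mono_set ?_ hR
    exact (integrableOn_const measure_ball_lt_top.ne).add
      ((((integrableOn_normPotential μ 0 R).add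
        (integrableOn_normPotential ν 0 R)).const_mul A).mul_const B)
  have hbound : ∀ᵐ z, ∀ (t : ℝ) (w : ℂ), ‖w‖ ≤ normPotential μ z + normPotential ν z →
      ‖Φ t * fderiv ℝ χ z (V z)‖ + ‖χ z * (deriv Φ t * inner ℝ w (V z))‖ ≤ g z := by
    filter_upwards [hB] with z hz t w hw
    by_cases hzs : z ∈ tsupport χ
    · have hVz : ‖V z‖ ≤ B := by simpa [hV] using hz hzs
      rw [hg, indicator_of_mem hzs]
      have h1 : ‖fderiv ℝ χ z (V z)‖ ≤ D * B :=
        ((fderiv ℝ χ z).le_opNorm _).trans (mul_le_mul (hD z) hVz (norm_nonneg _) hD0)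
      have h2 : ‖inner ℝ w (V z)‖ ≤ (normPotential μ z + normPotential ν z) * B :=
        (norm_inner_le_norm _ _).trans
          (mul_le_mul hw hVz (norm_nonneg _) ((norm_nonneg _).trans hw))
      rw [norm_mul, norm_mul, norm_mul, mul_assoc A]
      refine add_le_add (mul_le_mul (hA t) h1 (norm_nonneg _) hA0) ?_
      rw [Real.norm_of_nonneg (hχ0 z), ← one_mul (A * _)]
      exact mul_le_mul (hχ1 z) (mul_le_mul (hA' t) h2 (norm_nonneg _) hA0) (by positivity)
        zero_le_one
    · have h1 : fderiv ℝ χ z = 0 :=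
        image_eq_zero_of_notMem_tsupport fun h => hzs (tsupport_fderiv_subset ℝ h)
      rw [hg, indicator_of_notMem hzs, h1, image_eq_zero_of_notMem_tsupport hzs]
      simp
  have hu : Measurable fun z => potential μ z - potential ν z :=
    measurable_potential.sub measurable_potential
  have hF : ∀ᵐ z, ‖conj (cauchy μ z) - conj (cauchy ν z)‖ ≤
      normPotential μ z + normPotential ν z := .of_forall fun z => by
    refine (norm_sub_le _ _).trans ?_
    rw [RCLike.norm_conj, RCLike.norm_conj]
    exact add_le_add (norm_integral_le_integral_norm _) (norm_integral_le_integral_norm _)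
  have hi1 : Integrable fun z => Φ (potential μ z - potential ν z) * fderiv ℝ χ z (V z) := by
    refine hgi.mono' ((hΦ.continuous.measurable.comp hu).mul
      (measurable_clm_apply hdχ hVm)).aestronglyMeasurable ?_
    filter_upwards [hbound, hF] with z hz hFz
    exact (le_add_of_nonneg_right (norm_nonneg _)).trans (hz _ _ hFz)
  have hi2 : Integrable fun z => χ z * (deriv Φ (potential μ z - potential ν z) *
      inner ℝ (conj (cauchy μ z) - conj (cauchy ν z)) (V z)) := by
    refine hgi.mono' (hχ.continuous.measurable.mul ((hdΦ.measurable.comp hu).mul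
      (((measurable_conj_cauchy μ).sub (measurable_conj_cauchy ν)).inner
        hVm))).aestronglyMeasurable ?_
    filter_upwards [hbound, hF] with z hz hFz
    exact (le_add_of_nonneg_left (norm_nonneg _)).trans (hz _ _ hFz)
  refine ⟨hi1, hi2, ?_⟩
  rw [← integral_add hi1 hi2]
  set u : ℝ → ℂ → ℝ := fun δ z => regPotential μ δ z - regPotential ν δ z with hudef
  have huc : ∀ δ, 0 < δ → ContDiff ℝ 1 (u δ) := fun δ hδ =>
    (contDiff_regPotential hμK hδ).sub (contDiff_regPotential hνK hδ)
  have hψ : ∀ δ, 0 < δ → ContDiff ℝ 1 fun z => χ z * Φ (u δ z) := fun δ hδ =>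
    hχ.mul (hΦ.comp (huc δ hδ))
  have hfd : ∀ δ, 0 < δ → ∀ z, fderiv ℝ (fun z => χ z * Φ (u δ z)) z (V z) =
      Φ (u δ z) * fderiv ℝ χ z (V z) + χ z * (deriv Φ (u δ z) *
        inner ℝ (regGradient μ δ z - regGradient ν δ z) (V z)) := fun δ hδ z => by
    have h1 := (contDiff_regPotential hμK hδ).differentiable one_ne_zero z
    have h2 := (contDiff_regPotential hνK hδ).differentiable one_ne_zero z
    have h3 := ((hΦ.differentiable one_ne_zero (u δ z)).hasDerivAt).comp_hasFDerivAt z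
      (h1.hasFDerivAt.sub h2.hasFDerivAt)
    have h4 : HasFDerivAt (fun z => χ z * Φ (u δ z)) _ z :=
      (hχ.differentiable one_ne_zero z).hasFDerivAt.mul h3
    rw [h4.fderiv, inner_sub_left, ← fderiv_regPotential hμK hδ,
      ← fderiv_regPotential hνK hδ]
    simp [hudef]
    ring
  have hlim : Tendsto (fun δ => ∫ z, fderiv ℝ (fun z => χ z * Φ (u δ z)) z (V z)) (𝓝[>] 0)
      (𝓝 (∫ z, (Φ (potential μ z - potential ν z) * fderiv ℝ χ z (V z) +
        χ z * (deriv Φ (potential μ z - potential ν z) *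
          inner ℝ (conj (cauchy μ z) - conj (cauchy ν z)) (V z))))) := by
    refine tendsto_integral_filter_of_dominated_convergence g ?_ ?_ hgi ?_
    · filter_upwards [self_mem_nhdsWithin] with δ hδ
      exact (measurable_clm_apply ((hψ δ hδ).continuous_fderiv one_ne_zero)
        hVm).aestronglyMeasurable
    · filter_upwards [self_mem_nhdsWithin] with δ hδ
      filter_upwards [hbound, ae_integrable_kernel μ, ae_integrable_kernel ν] with z hz hμz hνz
      rw [hfd δ hδ]
      refine (norm_add_le _ _).trans (hz _ _ ((norm_sub_le _ _).trans ?_))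
      exact add_le_add (norm_regGradient_le hμz δ) (norm_regGradient_le hνz δ)
    · filter_upwards [ae_integrable_kernel μ, ae_integrable_kernel ν,
        ae_measure_singleton_eq_zero (μ := μ), ae_measure_singleton_eq_zero (μ := ν)]
        with z hμz hνz hμ0 hν0
      have hut : Tendsto (fun δ => u δ z) (𝓝[>] 0) (𝓝 (potential μ z - potential ν z)) :=
        (tendsto_regPotential hμK hμz hμ0).sub (tendsto_regPotential hνK hνz hν0)
      have hgt := ((tendsto_regGradient hμz).sub (tendsto_regGradient hνz)).inner
        (𝕜 := ℝ) (tendsto_const_nhds (x := V z))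
      have h := (((hΦ.continuous.tendsto _).comp hut).mul_const (fderiv ℝ χ z (V z))).add
        ((((hdΦ.tendsto _).comp hut).mul hgt).const_mul (χ z))
      refine h.congr' ?_
      filter_upwards [self_mem_nhdsWithin] with δ hδ
      exact (hfd δ hδ z).symm
  refine le_of_tendsto hlim ?_
  filter_upwards [self_mem_nhdsWithin] with δ hδ
  rw [hV, integral_fderiv_conj_cauchy ρ (hψ δ hδ) hc.mul_right]
  have hlow : -c ≤ ∫ ξ, χ ξ * Φ (u δ ξ) ∂ρ := by
    have h1 : ∫ _, -c ∂ρ = -c := by simp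
    rw [← h1]
    refine integral_mono (integrable_const _) ((hψ δ hδ).continuous.integrable_of_hasCompactSupport
      hc.mul_right) fun ξ => ?_
    nlinarith [hχ0 ξ, hχ1 ξ, hΦc (u δ ξ)]
  nlinarith [Real.pi_pos]

end

/-- A bounded function with minimum at least `-1 / (4 * M)` and derivative `s` at the origin. -/
noncomputable def truncation (M s t : ℝ) : ℝ := M * Real.arctan t ^ 2 + s * Real.arctan t

lemma contDiff_truncation (M s : ℝ) : ContDiff ℝ 1 (truncation M s) :=
  (contDiff_const.mul (Real.contDiff_arctan.pow 2)).add (contDiff_const.mul Real.contDiff_arctan)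

lemma deriv_truncation (M s t : ℝ) :
    deriv (truncation M s) t = (2 * M * Real.arctan t + s) * (1 + t ^ 2)⁻¹ := by
  have h : HasDerivAt (truncation M s) _ t := (((Real.hasDerivAt_arctan t).pow 2).const_mul M).add
    ((Real.hasDerivAt_arctan t).const_mul s)
  rw [h.deriv]
  simp
  ring

lemma abs_arctan_le_two (t : ℝ) : |Real.arctan t| ≤ 2 := by
  rw [abs_le]
  constructor <;>
    linarith [Real.arctan_lt_pi_div_two t, Real.neg_pi_div_two_lt_arctan t, Real.pi_le_four]

lemma abs_truncation_le {M s : ℝ} (hM : 0 < M) (hs : |s| = 1) (t : ℝ) :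
    |truncation M s t| ≤ 4 * M + 2 := by
  have h := abs_arctan_le_two t
  calc |truncation M s t| ≤ |M * Real.arctan t ^ 2| + |s * Real.arctan t| := abs_add_le _ _
    _ = M * |Real.arctan t| ^ 2 + |Real.arctan t| := by
        rw [abs_mul, abs_mul, abs_pow, hs, abs_of_pos hM, one_mul]
    _ ≤ M * 2 ^ 2 + 2 := by gcongr
    _ = _ := by ring

lemma abs_deriv_truncation_le {M s : ℝ} (hM : 0 < M) (hs : |s| = 1) (t : ℝ) :
    |deriv (truncation M s) t| ≤ 4 * M + 2 := by
  have h := abs_arctan_le_two t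
  have h1 : (1 + t ^ 2)⁻¹ ≤ 1 := inv_le_one_of_one_le₀ (by nlinarith)
  have h2 : |2 * M * Real.arctan t + s| ≤ 4 * M + 2 := by
    calc |2 * M * Real.arctan t + s| ≤ |2 * M * Real.arctan t| + |s| := abs_add_le _ _
      _ = 2 * M * |Real.arctan t| + 1 := by rw [abs_mul, hs, abs_of_pos (by positivity)]
      _ ≤ 2 * M * 2 + 1 := by gcongr
      _ ≤ _ := by linarith
  rw [deriv_truncation, abs_mul, abs_of_pos (by positivity : 0 < (1 + t ^ 2)⁻¹)]
  exact (mul_le_mul h2 h1 (by positivity) (by positivity)).trans (mul_one _).le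

lemma abs_truncation_le_mul {M s : ℝ} (hM : 0 < M) (hs : |s| = 1) (t : ℝ) :
    |truncation M s t| ≤ (4 * M + 2) * |t| := by
  have h := Convex.norm_image_sub_le_of_norm_deriv_le (𝕜 := ℝ) (f := truncation M s)
    (fun x _ => (contDiff_truncation M s).differentiable one_ne_zero x)
    (fun x _ => abs_deriv_truncation_le hM hs x) convex_univ (mem_univ 0) (mem_univ t)
  simpa [truncation] using h

lemma neg_le_truncation {M s : ℝ} (hM : 0 < M) (hs : |s| = 1) (t : ℝ) :
    -(1 / (4 * M)) ≤ truncation M s t := by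
  have hs2 : s ^ 2 = 1 := by rw [← sq_abs, hs, one_pow]
  have h : truncation M s t + 1 / (4 * M) = (2 * M * Real.arctan t + s) ^ 2 / (4 * M) := by
    rw [truncation]
    field_simp
    linear_combination -hs2
  have h' : 0 ≤ (2 * M * Real.arctan t + s) ^ 2 / (4 * M) := by positivity
  linarith

lemma truncation_inner_add {a b : ℂ} (h : a ^ 2 = b ^ 2) (M t : ℝ) :
    deriv (truncation M 1) t * inner ℝ (conj a - conj b) (conj a) +
      deriv (truncation M (-1)) t * inner ℝ (conj a - conj b) (conj b) =
    (1 + t ^ 2)⁻¹ * ‖a - b‖ ^ 2 := by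
  rw [deriv_truncation, deriv_truncation]
  rcases sq_eq_sq_iff_eq_or_eq_neg.1 h with rfl | rfl
  · simp
  · have h1 : conj (-b) - conj b = (2 : ℝ) • conj (-b) := by simp; ring
    have h2 : -b - b = (2 : ℝ) • (-b) := by simp; ring
    have h3 : conj b = -conj (-b) := by simp
    rw [h1, h2, h3, inner_neg_right, real_inner_smul_left, real_inner_self_eq_norm_sq, norm_smul,
      RCLike.norm_conj, mul_pow]
    norm_num
    ring

section

variable {μ ν : Measure ℂ} [IsProbabilityMeasure μ] [IsProbabilityMeasure ν]

lemma integral_energy_le (hμK : ∃ K : Set ℂ, IsCompact K ∧ μ Kᶜ = 0)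
    (hνK : ∃ K : Set ℂ, IsCompact K ∧ ν Kᶜ = 0)
    (hsq : ∀ᵐ z, cauchy μ z ^ 2 = cauchy ν z ^ 2) {χ : ℂ → ℝ} (hχ : ContDiff ℝ 1 χ)
    (hc : HasCompactSupport χ) (hχ0 : ∀ z, 0 ≤ χ z) (hχ1 : ∀ z, χ z ≤ 1) {B : ℝ}
    (hBμ : ∀ᵐ z, z ∈ tsupport χ → ‖cauchy μ z‖ ≤ B)
    (hBν : ∀ᵐ z, z ∈ tsupport χ → ‖cauchy ν z‖ ≤ B) {M : ℝ} (hM : 0 < M) :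
    Integrable (fun z => χ z *
      ((1 + (potential μ z - potential ν z) ^ 2)⁻¹ * ‖cauchy μ z - cauchy ν z‖ ^ 2)) ∧
    (∫ z, χ z *
      ((1 + (potential μ z - potential ν z) ^ 2)⁻¹ * ‖cauchy μ z - cauchy ν z‖ ^ 2)) ≤
      Real.pi / M -
      (∫ z, truncation M 1 (potential μ z - potential ν z) *
        fderiv ℝ χ z (conj (cauchy μ z))) -
      (∫ z, truncation M (-1) (potential μ z - potential ν z) *
        fderiv ℝ χ z (conj (cauchy ν z))) := by
  have hs1 : |(1 : ℝ)| = 1 := abs_one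
  have hs2 : |(-1 : ℝ)| = 1 := by simp
  obtain ⟨-, hi1, h1⟩ := integral_test_potential_le hμK hνK hχ hc hχ0 hχ1 hBμ
    (contDiff_truncation M 1) (abs_truncation_le hM hs1) (abs_deriv_truncation_le hM hs1)
    (by positivity) (neg_le_truncation hM hs1)
  obtain ⟨-, hi2, h2⟩ := integral_test_potential_le hμK hνK hχ hc hχ0 hχ1 hBν
    (contDiff_truncation M (-1)) (abs_truncation_le hM hs2) (abs_deriv_truncation_le hM hs2)
    (by positivity) (neg_le_truncation hM hs2)
  have he : (fun z => χ z *
      ((1 + (potential μ z - potential ν z) ^ 2)⁻¹ * ‖cauchy μ z - cauchy ν z‖ ^ 2)) =ᵐ[volume]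
      fun z => χ z * (deriv (truncation M 1) (potential μ z - potential ν z) *
        inner ℝ (conj (cauchy μ z) - conj (cauchy ν z)) (conj (cauchy μ z))) +
        χ z * (deriv (truncation M (-1)) (potential μ z - potential ν z) *
        inner ℝ (conj (cauchy μ z) - conj (cauchy ν z)) (conj (cauchy ν z))) := by
    filter_upwards [hsq] with z hz
    rw [← mul_add, truncation_inner_add hz]
  refine ⟨(hi1.add hi2).congr he.symm, ?_⟩
  rw [integral_congr_ae he, integral_add hi1 hi2]
  have hpi : 2 * Real.pi * (1 / (4 * M)) + 2 * Real.pi * (1 / (4 * M)) = Real.pi / M := by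
    field_simp
    norm_num
  linarith

end

/-! ### Contribution of the cutoffs -/

section

variable {ρ : Measure ℂ} [IsProbabilityMeasure ρ]

lemma integrable_mul_fderiv_conj_cauchy {h : ℂ → ℝ} (hm : Measurable h) {A : ℝ}
    (hA : ∀ z, |h z| ≤ A) {ψ : ℂ → ℝ} (hψ : ContDiff ℝ 1 ψ) (hc : HasCompactSupport ψ) :
    Integrable fun z => h z * fderiv ℝ ψ z (conj (cauchy ρ z)) := by
  have hd : Continuous (fderiv ℝ ψ) := hψ.continuous_fderiv one_ne_zero
  obtain ⟨D, hD⟩ := hd.bounded_above_of_compact_support (hc.fderiv ℝ)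
  obtain ⟨R, hR⟩ := hc.isCompact.isBounded.subset_ball 0
  have hA0 : 0 ≤ A := (abs_nonneg _).trans (hA 0)
  rw [← integrableOn_iff_integrable_of_support_subset (s := ball 0 R)]
  · refine ((integrableOn_cauchy ρ 0 R).norm.const_mul (A * D)).mono'
      (hm.mul (measurable_clm_apply hd (measurable_conj_cauchy ρ))).aestronglyMeasurable
      (.of_forall fun z => ?_)
    rw [norm_mul, mul_assoc]
    refine mul_le_mul (hA z) (((fderiv ℝ ψ z).le_opNorm _).trans ?_) (norm_nonneg _) hA0
    rw [RCLike.norm_conj]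
    gcongr
    exact hD z
  · intro z hz
    by_contra h'
    have h1 : fderiv ℝ ψ z = 0 :=
      image_eq_zero_of_notMem_tsupport fun h => h' (hR (tsupport_fderiv_subset ℝ h))
    simp [h1] at hz

lemma fderiv_bump_conj (a : ℂ) (ε : ℝ) (z w : ℂ) : fderiv ℝ (bump a ε) z (conj w) =
    -(4 / ε ^ 2 * deriv Real.smoothTransition (2 - 2 / ε ^ 2 * ‖z - a‖ ^ 2) *
      ((z - a) * w).re) := by
  rw [fderiv_bump, Complex.inner]
  congr 2
  rw [← Complex.conj_re, map_mul, Complex.conj_conj, Complex.conj_conj, mul_comm]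

lemma fderiv_bump_eq_zero {a z : ℂ} {ε : ℝ} (hε : 0 < ε) (hz : z ∉ ball a ε) (v : ℂ) :
    fderiv ℝ (bump a ε) z v = 0 := by
  rw [mem_ball_iff_norm, not_lt] at hz
  rw [fderiv_bump, deriv_smoothTransition_of_nonpos]
  · simp
  · have h1 : ε ^ 2 ≤ ‖z - a‖ ^ 2 := by gcongr
    rw [sub_nonpos, div_mul_eq_mul_div, le_div_iff₀ (by positivity)]
    linarith

lemma volume_real_ball (a : ℂ) {ε : ℝ} (hε : 0 < ε) :
    (volume : Measure ℂ).real (ball a ε) = Real.pi * ε ^ 2 := by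
  rw [measureReal_def, Complex.volume_ball, ENNReal.toReal_mul, ENNReal.toReal_pow,
    ENNReal.toReal_ofReal hε.le, ENNReal.coe_toReal, NNReal.coe_real_pi, mul_comm]

lemma integral_mul_fderiv_bump_le {h : ℂ → ℝ} (hm : Measurable h) {A c : ℝ}
    (hA : ∀ z, |h z| ≤ A) (hc0 : 0 ≤ c) (hc : ∀ z, -c ≤ h z) {B : ℝ}
    (hB : ∀ x, deriv Real.smoothTransition x ≤ B) (a : ℂ) {ε : ℝ} (hε : 0 < ε) :
    ∫ z, h z * fderiv ℝ (bump a ε) z (conj (cauchy ρ z)) ≤ 4 * Real.pi * B * c +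
      4 * A * B * ((ε ^ 2)⁻¹ * ∫ z in ball a ε, ‖(z - a) * cauchy ρ z - ρ.real {a}‖) := by
  have hi := integrable_mul_fderiv_conj_cauchy (ρ := ρ) hm hA (contDiff_bump a ε)
    (hasCompactSupport_bump a hε)
  have hA0 : 0 ≤ A := (abs_nonneg _).trans (hA 0)
  have hB0 : 0 ≤ B := (deriv_smoothTransition_nonneg 0).trans (hB 0)
  have hi1 : IntegrableOn (fun z => (z - a) * cauchy ρ z - ρ.real {a}) (ball a ε) := by
    refine Integrable.sub ?_ (integrableOn_const measure_ball_lt_top.ne)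
    refine ((integrableOn_cauchy ρ a ε).norm.const_mul ε).mono'
      (AEStronglyMeasurable.mul (by fun_prop) (aestronglyMeasurable_cauchy ρ).restrict) ?_
    filter_upwards [ae_restrict_mem measurableSet_ball] with z hz
    rw [norm_mul]
    gcongr
    exact (mem_ball_iff_norm.1 hz).le
  have hi2 : IntegrableOn (fun _ : ℂ => 4 / ε ^ 2 * B * c) (ball a ε) :=
    integrableOn_const measure_ball_lt_top.ne
  have hi3 := hi1.norm.const_mul (4 / ε ^ 2 * B * A)
  have hm0 : 0 ≤ ρ.real {a} := measureReal_nonneg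
  have hm1 : ρ.real {a} ≤ 1 := measureReal_le_one
  calc ∫ z, h z * fderiv ℝ (bump a ε) z (conj (cauchy ρ z))
      = ∫ z in ball a ε, h z * fderiv ℝ (bump a ε) z (conj (cauchy ρ z)) :=
        (setIntegral_eq_integral_of_forall_compl_eq_zero fun z hz => by
          rw [fderiv_bump_eq_zero hε hz, mul_zero]).symm
    _ ≤ ∫ z in ball a ε, (4 / ε ^ 2 * B * c +
          4 / ε ^ 2 * B * A * ‖(z - a) * cauchy ρ z - ρ.real {a}‖) := by
        refine setIntegral_mono_on hi.integrableOn (hi2.add hi3) measurableSet_ball fun z _ => ?_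
        rw [fderiv_bump_conj]
        set τ := deriv Real.smoothTransition (2 - 2 / ε ^ 2 * ‖z - a‖ ^ 2) with hτ
        set w := (z - a) * cauchy ρ z with hw
        have hτ0 : 0 ≤ τ := deriv_smoothTransition_nonneg _
        have hτB : τ ≤ B := hB _
        have h1 : |(w - ρ.real {a}).re| ≤ ‖w - ρ.real {a}‖ := Complex.abs_re_le_norm _
        have h2 : w.re = ρ.real {a} + (w - ρ.real {a}).re := by simp
        have h3 : -(h z * ρ.real {a}) ≤ c := by nlinarith [hc z]
        have h4 : -(h z * (w - ρ.real {a}).re) ≤ A * ‖w - ρ.real {a}‖ := by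
          refine (neg_le_abs _).trans ?_
          rw [abs_mul]
          exact mul_le_mul (hA z) h1 (abs_nonneg _) hA0
        calc h z * -(4 / ε ^ 2 * τ * w.re)
            = 4 / ε ^ 2 * τ * (-(h z * ρ.real {a}) + -(h z * (w - ρ.real {a}).re)) := by
              rw [h2]; ring
          _ ≤ 4 / ε ^ 2 * τ * (c + A * ‖w - ρ.real {a}‖) := by gcongr
          _ ≤ 4 / ε ^ 2 * B * (c + A * ‖w - ρ.real {a}‖) := by gcongr
          _ = _ := by ring
    _ = _ := by
        rw [integral_add hi2 hi3, integral_const_mul (4 / ε ^ 2 * B * A),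
          setIntegral_const, volume_real_ball a hε,
          smul_eq_mul]
        field_simp

end

section

variable {ρ : Measure ℂ} [IsProbabilityMeasure ρ]

lemma abs_log_norm_sub_le {K : ℝ} (hK : 0 < K) {z ξ : ℂ} (hz : 2 * K ≤ ‖z‖) (hξ : ‖ξ‖ ≤ K) :
    |Real.log ‖z - ξ‖ - Real.log ‖z‖| ≤ 2 * K / ‖z‖ := by
  have hz0 : 0 < ‖z‖ := by linarith
  have h1 : ‖z‖ / 2 ≤ ‖z - ξ‖ := by linarith [norm_sub_norm_le z ξ]
  have h2 : ‖z - ξ‖ ≤ ‖z‖ + K := (norm_sub_le _ _).trans (by linarith)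
  have h3 : ‖z‖ ≤ ‖z - ξ‖ + K := by linarith [norm_sub_norm_le z ξ]
  have h0 : 0 < ‖z - ξ‖ := by linarith
  rw [abs_le]
  constructor
  · have h := Real.log_le_sub_one_of_pos (div_pos hz0 h0)
    rw [Real.log_div hz0.ne' h0.ne'] at h
    have h4 : ‖z‖ / ‖z - ξ‖ - 1 ≤ 2 * K / ‖z‖ := by
      rw [sub_le_iff_le_add, div_le_iff₀ h0, add_mul, div_mul_eq_mul_div, one_mul]
      have h5 : K ≤ 2 * K * ‖z - ξ‖ / ‖z‖ := by
        rw [le_div_iff₀ hz0]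
        nlinarith
      linarith
    linarith
  · have h := Real.log_le_sub_one_of_pos (div_pos h0 hz0)
    rw [Real.log_div h0.ne' hz0.ne'] at h
    have h4 : ‖z - ξ‖ / ‖z‖ - 1 ≤ 2 * K / ‖z‖ := by
      rw [sub_le_iff_le_add, div_le_iff₀ hz0, add_mul, div_mul_cancel₀ _ hz0.ne']
      linarith
    linarith

lemma abs_potential_sub_log_le {K : ℝ} (hK : 0 < K) (hρ : ∀ᵐ ξ ∂ρ, ‖ξ‖ ≤ K) {z : ℂ}
    (hz : 2 * K ≤ ‖z‖) : |potential ρ z - Real.log ‖z‖| ≤ 2 * K / ‖z‖ := by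
  have hb : ∀ᵐ ξ ∂ρ, ‖Real.log ‖z - ξ‖ - Real.log ‖z‖‖ ≤ 2 * K / ‖z‖ := by
    filter_upwards [hρ] with ξ hξ using abs_log_norm_sub_le hK hz hξ
  have hi : Integrable (fun ξ => Real.log ‖z - ξ‖ - Real.log ‖z‖) ρ :=
    (integrable_const (2 * K / ‖z‖)).mono' (Measurable.aestronglyMeasurable (by fun_prop)) hb
  have he : potential ρ z - Real.log ‖z‖ = ∫ ξ, (Real.log ‖z - ξ‖ - Real.log ‖z‖) ∂ρ := by
    have hi' : Integrable (fun ξ => Real.log ‖z - ξ‖) ρ :=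
      (hi.add (integrable_const (Real.log ‖z‖))).congr (.of_forall fun ξ => by simp)
    rw [integral_sub hi' (integrable_const _), potential]
    simp
  rw [he]
  simpa using norm_integral_le_of_norm_le_const hb

lemma norm_mul_cauchy_le {K : ℝ} (hK : 0 < K) (hρ : ∀ᵐ ξ ∂ρ, ‖ξ‖ ≤ K) {z : ℂ}
    (hz : 2 * K ≤ ‖z‖) : ‖z * cauchy ρ z‖ ≤ 2 := by
  have hz0 : 0 < ‖z‖ := by linarith
  have hb : ∀ᵐ ξ ∂ρ, ‖(z - ξ)⁻¹‖ ≤ 2 / ‖z‖ := by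
    filter_upwards [hρ] with ξ hξ
    have h1 : ‖z‖ / 2 ≤ ‖z - ξ‖ := by linarith [norm_sub_norm_le z ξ]
    rw [norm_inv, ← inv_div]
    exact inv_anti₀ (by positivity) h1
  have h : ‖cauchy ρ z‖ ≤ 2 / ‖z‖ := by simpa [cauchy] using norm_integral_le_of_norm_le_const hb
  rw [norm_mul]
  calc ‖z‖ * ‖cauchy ρ z‖ ≤ ‖z‖ * (2 / ‖z‖) := by gcongr
    _ = 2 := by field_simp

lemma abs_integral_mul_fderiv_bump_zero_le {K : ℝ} (hK : 0 < K) (hρ : ∀ᵐ ξ ∂ρ, ‖ξ‖ ≤ K)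
    {h : ℂ → ℝ} {C : ℝ} (hC0 : 0 ≤ C) (hC : ∀ z, 2 * K ≤ ‖z‖ → |h z| ≤ C / ‖z‖) {B : ℝ}
    (hB : ∀ x, deriv Real.smoothTransition x ≤ B) {R : ℝ} (hR : 4 * K ≤ R) :
    |∫ z, h z * fderiv ℝ (bump 0 R) z (conj (cauchy ρ z))| ≤ 16 * Real.pi * B * C * R⁻¹ := by
  have hR0 : 0 < R := by linarith
  have hB0 : 0 ≤ B := (deriv_smoothTransition_nonneg 0).trans (hB 0)
  have he : ∫ z, h z * fderiv ℝ (bump 0 R) z (conj (cauchy ρ z)) =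
      ∫ z in ball 0 R, h z * fderiv ℝ (bump 0 R) z (conj (cauchy ρ z)) :=
    (setIntegral_eq_integral_of_forall_compl_eq_zero fun z hz => by
      rw [fderiv_bump_eq_zero hR0 hz, mul_zero]).symm
  have hb : ∀ z ∈ ball (0 : ℂ) R, ‖h z * fderiv ℝ (bump 0 R) z (conj (cauchy ρ z))‖ ≤
      16 * B * C / R ^ 3 := fun z _ => by
    rw [fderiv_bump_conj, sub_zero]
    rcases le_or_gt ‖z‖ (R / 2) with hz | hz
    · rw [deriv_smoothTransition_of_one_le]
      · simp only [mul_zero, zero_mul, neg_zero, norm_zero]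
        positivity
      · have h1 : ‖z‖ ^ 2 ≤ (R / 2) ^ 2 := by gcongr
        rw [le_sub_comm, div_mul_eq_mul_div, div_le_iff₀ (by positivity)]
        nlinarith
    · have hzK : 2 * K ≤ ‖z‖ := by linarith
      have h1 : |h z| ≤ 2 * C / R := (hC z hzK).trans (by
        rw [div_le_div_iff₀ (by linarith) hR0]
        nlinarith)
      have h2 : |(z * cauchy ρ z).re| ≤ 2 :=
        (Complex.abs_re_le_norm _).trans (norm_mul_cauchy_le hK hρ hzK)
      set τ := deriv Real.smoothTransition (2 - 2 / R ^ 2 * ‖z‖ ^ 2)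
      have hτ0 : 0 ≤ τ := deriv_smoothTransition_nonneg _
      have hτB : τ ≤ B := hB _
      rw [Real.norm_eq_abs, abs_mul, abs_neg, abs_mul,
        abs_of_nonneg (by positivity : 0 ≤ 4 / R ^ 2 * τ)]
      calc |h z| * (4 / R ^ 2 * τ * |(z * cauchy ρ z).re|)
          ≤ 2 * C / R * (4 / R ^ 2 * B * 2) := by gcongr
        _ = 16 * B * C / R ^ 3 := by ring
  rw [he]
  refine (norm_setIntegral_le_of_norm_le_const measure_ball_lt_top hb).trans_eq ?_
  rw [volume_real_ball 0 hR0]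
  field_simp

end

/-- A cutoff function which vanishes near the points of `Z` and near infinity. -/
noncomputable def cutoff (Z : Finset ℂ) (ε : ℝ) (z : ℂ) : ℝ :=
  bump 0 ε⁻¹ z - ∑ a ∈ Z, bump a ε z

section

variable {Z : Finset ℂ}

lemma contDiff_cutoff (Z : Finset ℂ) (ε : ℝ) : ContDiff ℝ 1 (cutoff Z ε) :=
  (contDiff_bump 0 ε⁻¹).sub (ContDiff.sum fun a _ => contDiff_bump a ε)

lemma fderiv_cutoff (Z : Finset ℂ) (ε : ℝ) (z v : ℂ) : fderiv ℝ (cutoff Z ε) z v =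
    fderiv ℝ (bump 0 ε⁻¹) z v - ∑ a ∈ Z, fderiv ℝ (bump a ε) z v := by
  have hd : ∀ a ε, HasFDerivAt (bump a ε) (fderiv ℝ (bump a ε) z) z := fun a ε =>
    ((contDiff_bump a ε).differentiable one_ne_zero z).hasFDerivAt
  have h : HasFDerivAt (cutoff Z ε) _ z := (hd 0 ε⁻¹).sub (HasFDerivAt.fun_sum fun a _ => hd a ε)
  rw [h.fderiv]
  simp

lemma eventually_separated (Z : Finset ℂ) : ∀ᶠ ε : ℝ in 𝓝[>] 0,
    (∀ a ∈ Z, ∀ b ∈ Z, a ≠ b → 2 * ε ≤ ‖a - b‖) ∧ ∀ a ∈ Z, ‖a‖ + ε ≤ ε⁻¹ / 2 := by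
  refine Filter.Eventually.and ?_ ?_
  · refine (eventually_all_finset Z).2 fun a _ => (eventually_all_finset Z).2 fun b _ => ?_
    by_cases hab : a = b
    · simp [hab]
    · have h : 0 < ‖a - b‖ / 2 := half_pos (norm_pos_iff.2 (sub_ne_zero.2 hab))
      filter_upwards [Ioo_mem_nhdsGT h] with ε hε _
      linarith [hε.2]
  · refine (eventually_all_finset Z).2 fun a _ => ?_
    filter_upwards [tendsto_inv_nhdsGT_zero.eventually_ge_atTop (2 * (‖a‖ + 1)),
      Ioo_mem_nhdsGT (zero_lt_one' ℝ)] with ε h1 h2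
    linarith [h2.2]

lemma eventually_cutoff_eq_one {z : ℂ} (hz : z ∉ Z) : ∀ᶠ ε : ℝ in 𝓝[>] 0, cutoff Z ε z = 1 := by
  have h : ∀ᶠ ε : ℝ in 𝓝[>] 0, ∀ a ∈ Z, ε ≤ ‖z - a‖ :=
    (eventually_all_finset Z).2 fun a ha => by
      have h : 0 < ‖z - a‖ := norm_pos_iff.2 (sub_ne_zero.2 fun h => hz (h ▸ ha))
      filter_upwards [Ioo_mem_nhdsGT h] with ε hε using hε.2.le
  filter_upwards [h, tendsto_inv_nhdsGT_zero.eventually_ge_atTop (2 * ‖z‖),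
    self_mem_nhdsWithin] with ε h1 h2 hε
  rw [mem_Ioi] at hε
  rw [cutoff, bump_eq_one (inv_pos.2 hε) (by rw [sub_zero]; linarith),
    Finset.sum_eq_zero fun a ha => bump_eq_zero hε (h1 a ha), sub_zero]

lemma hasCompactSupport_cutoff {ε : ℝ} (hε : 0 < ε) (hin : ∀ a ∈ Z, ‖a‖ + ε ≤ ε⁻¹ / 2) :
    HasCompactSupport (cutoff Z ε) :=
  HasCompactSupport.of_support_subset_isCompact (isCompact_closedBall 0 ε⁻¹) fun z hz => by
    by_contra h
    rw [mem_closedBall_iff_norm, not_le] at h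
    refine hz ?_
    have hε' : 0 < ε⁻¹ := inv_pos.2 hε
    rw [cutoff, bump_eq_zero hε' h.le, Finset.sum_eq_zero, sub_zero]
    intro a ha
    refine bump_eq_zero hε ?_
    rw [sub_zero] at h
    linarith [hin a ha, norm_sub_norm_le z a]

lemma cutoff_le_one (Z : Finset ℂ) (ε : ℝ) (z : ℂ) : cutoff Z ε z ≤ 1 :=
  (sub_le_self _ (Finset.sum_nonneg fun a _ => bump_nonneg a ε z)).trans (bump_le_one _ _ _)

lemma cutoff_of_mem_ball {ε : ℝ} (hε : 0 < ε)
    (hsep : ∀ a ∈ Z, ∀ b ∈ Z, a ≠ b → 2 * ε ≤ ‖a - b‖) (hin : ∀ a ∈ Z, ‖a‖ + ε ≤ ε⁻¹ / 2)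
    {a : ℂ} (ha : a ∈ Z) {z : ℂ} (hz : z ∈ ball a ε) : cutoff Z ε z = 1 - bump a ε z := by
  rw [mem_ball_iff_norm] at hz
  have hz' : ‖z‖ ≤ ‖a‖ + ‖z - a‖ := by linarith [norm_sub_norm_le z a]
  rw [cutoff, bump_eq_one (inv_pos.2 hε) (by rw [sub_zero]; linarith [hin a ha]),
    Finset.sum_eq_single_of_mem a ha]
  intro b hb hba
  have h1 := hsep a ha b hb hba.symm
  have h2 : ‖a - b‖ ≤ ‖z - a‖ + ‖z - b‖ := by
    rw [norm_sub_rev z a]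
    exact norm_sub_le_norm_sub_add_norm_sub _ _ _
  exact bump_eq_zero hε (by linarith)

lemma cutoff_nonneg {ε : ℝ} (hε : 0 < ε)
    (hsep : ∀ a ∈ Z, ∀ b ∈ Z, a ≠ b → 2 * ε ≤ ‖a - b‖) (hin : ∀ a ∈ Z, ‖a‖ + ε ≤ ε⁻¹ / 2)
    (z : ℂ) : 0 ≤ cutoff Z ε z := by
  by_cases h : ∃ a ∈ Z, z ∈ ball a ε
  · obtain ⟨a, ha, hz⟩ := h
    rw [cutoff_of_mem_ball hε hsep hin ha hz, sub_nonneg]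
    exact bump_le_one _ _ _
  · push Not at h
    rw [cutoff, Finset.sum_eq_zero, sub_zero]
    · exact bump_nonneg _ _ _
    · intro a ha
      refine bump_eq_zero hε ?_
      simpa [← dist_eq_norm] using h a ha

lemma disjoint_tsupport_cutoff {ε : ℝ} (hε : 0 < ε)
    (hsep : ∀ a ∈ Z, ∀ b ∈ Z, a ≠ b → 2 * ε ≤ ‖a - b‖) (hin : ∀ a ∈ Z, ‖a‖ + ε ≤ ε⁻¹ / 2) :
    Disjoint (tsupport (cutoff Z ε)) Z := by
  rw [Set.disjoint_right]
  intro a ha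
  rw [notMem_tsupport_iff_eventuallyEq]
  filter_upwards [ball_mem_nhds a (half_pos hε)] with z hz
  rw [cutoff_of_mem_ball hε hsep hin (Finset.mem_coe.1 ha) (ball_subset_ball (by linarith) hz),
    bump_eq_one hε (mem_ball_iff_norm.1 hz).le]
  simp

lemma neg_integral_mul_fderiv_cutoff_le {ρ : Measure ℂ} [IsProbabilityMeasure ρ] {K : ℝ}
    (hK : 0 < K) (hρ : ∀ᵐ ξ ∂ρ, ‖ξ‖ ≤ K) {h : ℂ → ℝ} (hm : Measurable h) {A c C : ℝ}
    (hA : ∀ z, |h z| ≤ A) (hc0 : 0 ≤ c) (hc : ∀ z, -c ≤ h z)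
    (hC0 : 0 ≤ C) (hC : ∀ z, 2 * K ≤ ‖z‖ → |h z| ≤ C / ‖z‖) {B : ℝ}
    (hB : ∀ x, deriv Real.smoothTransition x ≤ B) {ε : ℝ} (hε : 0 < ε) (hεK : 4 * K ≤ ε⁻¹) :
    -∫ z, h z * fderiv ℝ (cutoff Z ε) z (conj (cauchy ρ z)) ≤ 16 * Real.pi * B * C * ε +
      ∑ a ∈ Z, (4 * Real.pi * B * c +
      4 * A * B * ((ε ^ 2)⁻¹ * ∫ z in ball a ε, ‖(z - a) * cauchy ρ z - ρ.real {a}‖)) := by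
  have hi : ∀ (a : ℂ) (ε : ℝ), 0 < ε →
      Integrable fun z => h z * fderiv ℝ (bump a ε) z (conj (cauchy ρ z)) := fun a ε hε =>
    integrable_mul_fderiv_conj_cauchy hm hA (contDiff_bump a ε) (hasCompactSupport_bump a hε)
  simp_rw [fderiv_cutoff, mul_sub, Finset.mul_sum]
  rw [integral_sub (hi 0 _ (inv_pos.2 hε)) (integrable_finsetSum _ fun a _ => hi a ε hε),
    integral_finsetSum _ fun a _ => hi a ε hε, neg_sub, sub_eq_neg_add]
  refine add_le_add ?_ (Finset.sum_le_sum fun a _ =>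
    integral_mul_fderiv_bump_le hm hA hc0 hc hB a hε)
  have h1 := abs_integral_mul_fderiv_bump_zero_le hK hρ hC0 hC hB hεK
  rw [inv_inv] at h1
  exact (neg_le_abs _).trans h1

end

/-! ### Uniqueness -/

lemma exists_ae_norm_le {μ : Measure ℂ} (hμK : ∃ K : Set ℂ, IsCompact K ∧ μ Kᶜ = 0) :
    ∃ K, 0 < K ∧ ∀ᵐ ξ ∂μ, ‖ξ‖ ≤ K := by
  obtain ⟨S, hS, h0⟩ := hμK
  obtain ⟨K, hK0, hK⟩ := hS.isBounded.exists_pos_norm_le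
  refine ⟨K, hK0, ?_⟩
  filter_upwards [mem_ae_iff.2 h0] with ξ hξ using hK ξ hξ

section

variable {μ ν : Measure ℂ} [IsProbabilityMeasure μ] [IsProbabilityMeasure ν]

lemma cauchy_ae_eq (hμK : ∃ K : Set ℂ, IsCompact K ∧ μ Kᶜ = 0)
    (hνK : ∃ K : Set ℂ, IsCompact K ∧ ν Kᶜ = 0)
    (hsq : ∀ᵐ z, cauchy μ z ^ 2 = cauchy ν z ^ 2) (Z : Finset ℂ)
    (hloc : ∀ S : Set ℂ, IsCompact S → Disjoint S Z →
      ∃ B, ∀ᵐ z, z ∈ S → ‖cauchy μ z‖ ≤ B ∧ ‖cauchy ν z‖ ≤ B) :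
    cauchy μ =ᵐ[volume] cauchy ν := by
  obtain ⟨K₁, hK₁, hμ₁⟩ := exists_ae_norm_le hμK
  obtain ⟨K₂, hK₂, hν₂⟩ := exists_ae_norm_le hνK
  obtain ⟨K, hK, hμ, hν⟩ : ∃ K, 0 < K ∧ (∀ᵐ ξ ∂μ, ‖ξ‖ ≤ K) ∧ ∀ᵐ ξ ∂ν, ‖ξ‖ ≤ K :=
    ⟨max K₁ K₂, lt_max_of_lt_left hK₁, hμ₁.mono fun _ h => h.trans (le_max_left _ _),
      hν₂.mono fun _ h => h.trans (le_max_right _ _)⟩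
  obtain ⟨B, hB0, hB⟩ := exists_deriv_smoothTransition_le
  set u : ℂ → ℝ := fun z => potential μ z - potential ν z with hu
  have hum : Measurable u := measurable_potential.sub measurable_potential
  have huK : ∀ z, 2 * K ≤ ‖z‖ → |u z| ≤ 4 * K / ‖z‖ := fun z hz => by
    have h1 := abs_potential_sub_log_le hK hμ hz
    have h2 := abs_potential_sub_log_le hK hν hz
    have h3 : u z = (potential μ z - Real.log ‖z‖) - (potential ν z - Real.log ‖z‖) := by
      rw [hu]; ring
    calc |u z| ≤ 2 * K / ‖z‖ + 2 * K / ‖z‖ := by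
          rw [h3]
          exact (abs_sub _ _).trans (add_le_add h1 h2)
      _ = 4 * K / ‖z‖ := by ring
  set g : ℂ → ℝ := fun z => (1 + u z ^ 2)⁻¹ * ‖cauchy μ z - cauchy ν z‖ ^ 2 with hg
  have hg0 : ∀ z, 0 ≤ g z := fun z => by positivity
  have hgm : AEMeasurable g := by
    have h1 : Measurable fun z => (1 + u z ^ 2)⁻¹ := by fun_prop
    exact h1.aemeasurable.mul (((aestronglyMeasurable_cauchy μ).sub
      (aestronglyMeasurable_cauchy ν)).norm.aemeasurable.pow_const 2)
  have hestimate : ∀ M : ℝ, 0 < M → ∫⁻ z, ENNReal.ofReal (g z) ≤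
      ENNReal.ofReal ((Real.pi + 2 * Real.pi * B * Z.card) * M⁻¹) := by
    intro M hM
    have hterm : ∀ (ρ : Measure ℂ) [IsProbabilityMeasure ρ], (∀ᵐ ξ ∂ρ, ‖ξ‖ ≤ K) →
        ∀ s : ℝ, |s| = 1 → ∀ ε : ℝ, 0 < ε → 4 * K ≤ ε⁻¹ →
        -∫ z, truncation M s (u z) * fderiv ℝ (cutoff Z ε) z (conj (cauchy ρ z)) ≤
          16 * Real.pi * B * ((4 * M + 2) * (4 * K)) * ε + ∑ a ∈ Z,
            (4 * Real.pi * B * (1 / (4 * M)) + 4 * (4 * M + 2) * B * ((ε ^ 2)⁻¹ *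
              ∫ z in ball a ε, ‖(z - a) * cauchy ρ z - ρ.real {a}‖)) := by
      intro ρ _ hρ s hs ε hε hεK
      refine neg_integral_mul_fderiv_cutoff_le hK hρ
        ((contDiff_truncation M s).continuous.measurable.comp hum)
        (fun z => abs_truncation_le hM hs _) (by positivity)
        (fun z => neg_le_truncation hM hs _) (by positivity) (fun z hz => ?_) hB hε hεK
      refine (abs_truncation_le_mul hM hs _).trans ?_
      rw [mul_div_assoc]
      exact mul_le_mul_of_nonneg_left (huK z hz) (by positivity)
    set b : Measure ℂ → ℝ → ℝ := fun ρ ε =>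
      16 * Real.pi * B * ((4 * M + 2) * (4 * K)) * ε + ∑ a ∈ Z,
        (4 * Real.pi * B * (1 / (4 * M)) + 4 * (4 * M + 2) * B * ((ε ^ 2)⁻¹ *
          ∫ z in ball a ε, ‖(z - a) * cauchy ρ z - ρ.real {a}‖)) with hb
    have hblim : ∀ (ρ : Measure ℂ) [IsProbabilityMeasure ρ],
        Tendsto (b ρ) (𝓝[>] 0) (𝓝 (Real.pi * B * Z.card * M⁻¹)) := by
      intro ρ _
      have h1 : Tendsto (fun ε : ℝ => ε) (𝓝[>] 0) (𝓝 0) := tendsto_id.mono_left nhdsWithin_le_nhds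
      have h2 := (h1.const_mul (16 * Real.pi * B * ((4 * M + 2) * (4 * K)))).add
        (tendsto_finsetSum Z fun a _ => ((tendsto_average_cauchy ρ a).const_mul
          (4 * (4 * M + 2) * B)).const_add (4 * Real.pi * B * (1 / (4 * M))))
      convert h2 using 2
      simp
      field_simp
    have hlim : Tendsto (fun ε => ENNReal.ofReal (Real.pi / M + b μ ε + b ν ε)) (𝓝[>] 0)
        (𝓝 (ENNReal.ofReal ((Real.pi + 2 * Real.pi * B * Z.card) * M⁻¹))) := by
      refine ENNReal.tendsto_ofReal ?_
      convert ((hblim μ).const_add (Real.pi / M)).add (hblim ν) using 2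
      ring
    have hle : ∀ᶠ ε : ℝ in 𝓝[>] 0, ∫⁻ z, ENNReal.ofReal (cutoff Z ε z * g z) ≤
        ENNReal.ofReal (Real.pi / M + b μ ε + b ν ε) := by
      filter_upwards [eventually_separated Z, self_mem_nhdsWithin,
        tendsto_inv_nhdsGT_zero.eventually_ge_atTop (4 * K)] with ε ⟨hsep, hin⟩ hε hεK
      have hχ0 := cutoff_nonneg hε hsep hin
      have hcs := hasCompactSupport_cutoff hε hin
      obtain ⟨D, hD⟩ := hloc _ hcs.isCompact (disjoint_tsupport_cutoff hε hsep hin)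
      obtain ⟨hint, hen⟩ := integral_energy_le hμK hνK hsq (contDiff_cutoff Z ε) hcs hχ0
        (cutoff_le_one Z ε) (hD.mono fun z h hz => (h hz).1) (hD.mono fun z h hz => (h hz).2) hM
      rw [← ofReal_integral_eq_lintegral_ofReal hint
        (.of_forall fun z => mul_nonneg (hχ0 z) (hg0 z))]
      refine ENNReal.ofReal_le_ofReal (hen.trans ?_)
      have h1 := hterm μ hμ 1 abs_one ε hε hεK
      have h2 := hterm ν hν (-1) (by simp) ε hε hεK
      simp only [hb]
      linarith
    calc ∫⁻ z, ENNReal.ofReal (g z)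
        = ∫⁻ z, liminf (fun ε => ENNReal.ofReal (cutoff Z ε z * g z)) (𝓝[>] 0) := by
          refine lintegral_congr_ae ?_
          filter_upwards [Z.countable_toSet.ae_notMem volume] with z hz
          refine (Tendsto.liminf_eq (tendsto_const_nhds.congr' ?_)).symm
          filter_upwards [eventually_cutoff_eq_one hz] with ε hε
          rw [hε, one_mul]
      _ ≤ liminf (fun ε => ∫⁻ z, ENNReal.ofReal (cutoff Z ε z * g z)) (𝓝[>] 0) :=
          lintegral_liminf_le' fun ε =>
            ((contDiff_cutoff Z ε).continuous.aemeasurable.mul hgm).ennreal_ofReal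
      _ ≤ liminf (fun ε => ENNReal.ofReal (Real.pi / M + b μ ε + b ν ε)) (𝓝[>] 0) :=
          liminf_le_liminf hle
      _ = _ := hlim.liminf_eq
  have hzero : ∫⁻ z, ENNReal.ofReal (g z) = 0 := by
    have hlim : Tendsto (fun M : ℝ => ENNReal.ofReal ((Real.pi + 2 * Real.pi * B * Z.card) * M⁻¹))
        atTop (𝓝 0) := by
      simpa using ENNReal.tendsto_ofReal
        (tendsto_inv_atTop_zero.const_mul (Real.pi + 2 * Real.pi * B * Z.card))
    refine le_antisymm (ge_of_tendsto hlim ?_) zero_le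
    filter_upwards [eventually_gt_atTop 0] with M hM using hestimate M hM
  filter_upwards [(lintegral_eq_zero_iff' hgm.ennreal_ofReal).1 hzero] with z hz
  have h1 : g z ≤ 0 := ENNReal.ofReal_eq_zero.1 hz
  have h2 : g z = 0 := le_antisymm h1 (hg0 z)
  have h3 : (1 + u z ^ 2)⁻¹ ≠ 0 := by positivity
  have h4 := (mul_eq_zero.1 h2).resolve_left h3
  exact sub_eq_zero.1 (norm_eq_zero.1 (pow_eq_zero_iff two_ne_zero |>.1 h4))

lemma eq_of_cauchy_ae_eq (h : cauchy μ =ᵐ[volume] cauchy ν) : μ = ν := by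
  refine ext_of_integral_contDiff fun ψ hψ hc => ?_
  have h1 := integral_fderiv_conj_cauchy μ hψ hc
  have h2 := integral_fderiv_conj_cauchy ν hψ hc
  have h3 : ∫ z, fderiv ℝ ψ z (conj (cauchy μ z)) = ∫ z, fderiv ℝ ψ z (conj (cauchy ν z)) :=
    integral_congr_ae (h.mono fun z hz => by simp only [hz])
  rw [h1, h2] at h3
  exact mul_left_cancel₀ (neg_ne_zero.2 (by positivity)) h3

end

end CauchyTransform

/-- Theorem 5 (uniqueness part): for monic polynomials `U₁, U₂` with
`deg U₂ = deg U₁ + 2`, there is at most one compactly supported positive probability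
measure on `ℂ` whose Cauchy transform squares to `U₁/U₂` Lebesgue-almost everywhere. -/
theorem stmt7 (U₁ U₂ : Polynomial ℂ) (h₁ : U₁.Monic) (h₂ : U₂.Monic)
    (hdeg : U₂.natDegree = U₁.natDegree + 2)
    (μ ν : Measure ℂ) [IsProbabilityMeasure μ] [IsProbabilityMeasure ν]
    (hμK : ∃ K : Set ℂ, IsCompact K ∧ μ Kᶜ = 0)
    (hνK : ∃ K : Set ℂ, IsCompact K ∧ ν Kᶜ = 0)
    (hμ : ∀ᵐ z ∂(MeasureTheory.volume : Measure ℂ),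
      Integrable (fun ξ => (z - ξ)⁻¹) μ ∧
      (∫ ξ, (z - ξ)⁻¹ ∂μ) ^ 2 = U₁.eval z / U₂.eval z)
    (hν : ∀ᵐ z ∂(MeasureTheory.volume : Measure ℂ),
      Integrable (fun ξ => (z - ξ)⁻¹) ν ∧
      (∫ ξ, (z - ξ)⁻¹ ∂ν) ^ 2 = U₁.eval z / U₂.eval z) :
    μ = ν := by
  refine CauchyTransform.eq_of_cauchy_ae_eq (CauchyTransform.cauchy_ae_eq hμK hνK ?_
    U₂.roots.toFinset fun S hS hSZ => ?_)
  · filter_upwards [hμ, hν] with z hμz hνz using hμz.2.trans hνz.2.symm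
  · have hne : ∀ z ∈ S, U₂.eval z ≠ 0 := fun z hz h0 =>
      Set.disjoint_left.1 hSZ hz (by simpa [h₂.ne_zero] using h0)
    obtain ⟨D, hD⟩ := hS.exists_bound_of_continuousOn
      (U₁.continuous.continuousOn.div U₂.continuous.continuousOn hne)
    have hbound : ∀ {w : ℂ}, ‖w ^ 2‖ ≤ D → ‖w‖ ≤ D + 1 := fun {w} hw => by
      rw [norm_pow] at hw
      nlinarith [sq_nonneg (‖w‖ - 1)]
    refine ⟨D + 1, ?_⟩
    filter_upwards [hμ, hν] with z hμz hνz hz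
    exact ⟨hbound (by rw [CauchyTransform.cauchy, hμz.2]; exact hD z hz),
      hbound (by rw [CauchyTransform.cauchy, hνz.2]; exact hD z hz)⟩
end
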